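/- arXiv:2201.00476 — 3 statements merged into one kernel-verified Lean document; each statement's English description precedes it below -/
import Mathlib

section
/- Let s ≥ 2, let P_1,...,P_s be distinct points in P^n over an algebraically closed field K, and let m_1 ≥ m_2 ≥ ... ≥ m_s be positive integers. If I = ℘_1^{m_1} ∩ ... ∩ ℘_s^{m_s} ⊂ R = K[X_0,...,X_n], then reg(R/I) ≥ m_1 + m_2 - 1. -/
open MvPolynomial

noncomputable section

/-- The defining prime ideal of the point of projective space with homogeneous
coordinates `p`: the ideal generated by the linear forms vanishing at `p`. -/
def pointIdeal {K : Type} [Field K] {N : ℕ} (p : Fin N → K) :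
    Ideal (MvPolynomial (Fin N) K) :=
  Ideal.span {f | f.IsHomogeneous 1 ∧ eval p f = 0}

/-- The ideal of the fat point scheme `m₁P₁ + ⋯ + m_sP_s`. -/
def fatIdeal {K : Type} [Field K] {N s : ℕ} (p : Fin s → Fin N → K) (m : Fin s → ℕ) :
    Ideal (MvPolynomial (Fin N) K) :=
  ⨅ i, pointIdeal (p i) ^ (m i)

/-- `dim_K` of the degree-`t` graded piece of the ideal `I`. -/
def gradedDim (K : Type) [Field K] {N : ℕ} (I : Ideal (MvPolynomial (Fin N) K)) (t : ℕ) : ℕ :=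
  Module.finrank K ↥(homogeneousSubmodule (Fin N) K t ⊓ I.restrictScalars K)

/-- The Hilbert function of `R/I` in degree `t`. -/
def hilbFn (K : Type) [Field K] {N : ℕ} (I : Ideal (MvPolynomial (Fin N) K)) (t : ℕ) : ℕ :=
  Module.finrank K ↥(homogeneousSubmodule (Fin N) K t) - gradedDim K I t

/-- The regularity index of `R/I` relative to the multiplicity `e`:
the least `t` with `H_{R/I}(t) = e`. -/
def regIndex (K : Type) [Field K] {N : ℕ} (I : Ideal (MvPolynomial (Fin N) K)) (e : ℕ) : ℕ :=
  sInf {t | hilbFn K I t = e}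

/-- The multiplicity `e(R/I) = ∑ C(mᵢ+n-1, n)` of a fat point scheme in `ℙⁿ`. -/
def fatMult (n : ℕ) {s : ℕ} (m : Fin s → ℕ) : ℕ :=
  ∑ i, (m i + n - 1).choose n

/-- The regularity index of the fat point scheme `m₁P₁ + ⋯ + m_sP_s` in `ℙⁿ`. -/
def regFat (K : Type) [Field K] {n s : ℕ} (p : Fin s → Fin (n + 1) → K) (m : Fin s → ℕ) : ℕ :=
  regIndex K (fatIdeal p m) (fatMult n m)

/-- The coordinate vectors `p i` represent distinct points of projective space. -/
def ProjDistinct {K : Type} [Field K] {N s : ℕ} (p : Fin s → Fin N → K) : Prop :=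
  (∀ i, p i ≠ 0) ∧ ∀ i j, i ≠ j → ∀ c : K, p i ≠ c • p j

/-- The points `p i`, `i ∈ Q`, lie on a `j`-dimensional linear subspace of `ℙⁿ`. -/
def OnLinearSubspace {K : Type} [Field K] {N s : ℕ} (p : Fin s → Fin N → K)
    (Q : Finset (Fin s)) (j : ℕ) : Prop :=
  ∃ W : Submodule K (Fin N → K), Module.finrank K ↥W ≤ j + 1 ∧ ∀ i ∈ Q, p i ∈ W

open Classical in
/-- The Segre bound `T(Z) = max {T_j(Z) | j = 1,…,n}` for fat points in `ℙⁿ`. -/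
def segreBound {K : Type} [Field K] (n : ℕ) {s : ℕ} (p : Fin s → Fin (n + 1) → K)
    (m : Fin s → ℕ) : ℕ :=
  (Finset.Icc 1 n).sup fun j =>
    Finset.univ.powerset.sup fun Q =>
      if Q.Nonempty ∧ OnLinearSubspace p Q j then (∑ i ∈ Q, m i + j - 2) / j else 0

/-- The standard coordinate point `(1,0,…,0)`. -/
def stdPt (K : Type) [Field K] (N : ℕ) : Fin N → K := fun j => if (j : ℕ) = 0 then 1 else 0

lemma card_lowDegree (n m : ℕ) (hm : 0 < m) :
    (((Finset.range m).biUnion fun d => (Finset.univ : Finset (Fin n)).finsuppAntidiag d)).card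
      = (m + n - 1).choose n := by
  rw [Finset.card_biUnion]
  · simp only [Finset.card_finsuppAntidiag_nat_eq_multichoose, Finset.card_univ, Fintype.card_fin]
    obtain ⟨k, rfl⟩ : ∃ k, m = k + 1 := ⟨m - 1, by omega⟩
    rw [Nat.sum_range_multichoose]
    congr 1
    omega
  · intro a _ b _ hab
    simp only [Finset.disjoint_left, Finset.mem_finsuppAntidiag]
    rintro x ⟨h1, _⟩ ⟨h2, _⟩
    exact hab (h1.symm.trans h2)

lemma mem_lowDegree (n m : ℕ) (a : Fin n →₀ ℕ) :
    a ∈ ((Finset.range m).biUnion fun d => (Finset.univ : Finset (Fin n)).finsuppAntidiag d)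
      ↔ a.degree < m := by
  simp [Finset.mem_finsuppAntidiag, Finsupp.degree_eq_sum]

/-- A system of coordinates adapted to the point `p`. -/
structure Chart {K : Type} [Field K] {n : ℕ} (p : Fin (n + 1) → K) where
  psi : MvPolynomial (Fin (n + 1)) K →ₐ[K] MvPolynomial (Fin n) K
  l0 : MvPolynomial (Fin (n + 1)) K
  l : Fin n → MvPolynomial (Fin (n + 1)) K
  h0 : l0.IsHomogeneous 1
  h : ∀ j, (l j).IsHomogeneous 1
  e0 : eval p l0 = 1
  e : ∀ j, eval p (l j) = 0
  psi0 : psi l0 = 1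
  psil : ∀ j, psi (l j) = X j
  psic : ∀ f, constantCoeff (psi f) = eval p f
  spn : ∀ (t : ℕ) (f), f.IsHomogeneous t →
    f ∈ Submodule.span K {g | ∃ (c : ℕ) (a : Fin n →₀ ℕ), c + a.degree = t ∧
      g = l0 ^ c * a.prod fun j e => l j ^ e}

lemma exists_chart {K : Type} [Field K] {n : ℕ} (p : Fin (n + 1) → K) (hp : p ≠ 0) :
    Nonempty (Chart p) := by
  obtain ⟨k, hk⟩ : ∃ k, p k ≠ 0 := by
    by_contra! h
    exact hp (funext h)
  let l0 : MvPolynomial (Fin (n + 1)) K := C (p k)⁻¹ * X k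
  let l : Fin n → MvPolynomial (Fin (n + 1)) K :=
    fun j => X (k.succAbove j) - C (p (k.succAbove j)) * l0
  let psi : MvPolynomial (Fin (n + 1)) K →ₐ[K] MvPolynomial (Fin n) K :=
    aeval (k.insertNth (C (p k)) fun j => C (p (k.succAbove j)) + X j :
      Fin (n + 1) → MvPolynomial (Fin n) K)
  have h0 : l0.IsHomogeneous 1 := isHomogeneous_C_mul_X _ _
  have h : ∀ j, (l j).IsHomogeneous 1 := fun j =>
    (isHomogeneous_X _ _).sub (h0.C_mul _)
  have psi0 : psi l0 = 1 := by
    simp only [psi, l0, map_mul, aeval_X, Fin.insertNth_apply_same, algHom_C]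
    simp only [algebraMap_eq]
    rw [← C_mul, inv_mul_cancel₀ hk, C_1]
  have psil : ∀ j, psi (l j) = X j := by
    intro j
    simp only [l, map_sub, map_mul, psi0]
    simp [psi, algebraMap_eq]
  refine ⟨⟨psi, l0, l, h0, h, ?_, ?_, psi0, psil, ?_, ?_⟩⟩
  · simp [l0, hk]
  · intro j
    simp [l, l0, hk]
  · intro f
    have : (constantCoeff : MvPolynomial (Fin n) K →+* K).comp psi.toRingHom = eval p := by
      apply MvPolynomial.ringHom_ext
      · intro r
        simp [psi, algebraMap_eq]
      · intro i
        rcases Fin.eq_self_or_eq_succAbove k i with rfl | ⟨j, rfl⟩ <;> simp [psi]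
    exact RingHom.congr_fun this f
  · intro t f hf
    let g : Fin (n + 1) → MvPolynomial (Fin (n + 1)) K :=
      k.insertNth (C (p k) * X k) fun j => X (k.succAbove j) + C (p (k.succAbove j)) * X k
    let L : Fin (n + 1) → MvPolynomial (Fin (n + 1)) K := k.insertNth l0 l
    have hF : (aeval g f).IsHomogeneous (1 * t) := by
      apply hf.aeval
      intro i
      rcases Fin.eq_self_or_eq_succAbove k i with rfl | ⟨j, rfl⟩
      · simpa [g] using isHomogeneous_C_mul_X _ _
      · simpa [g] using (isHomogeneous_X _ _).add (isHomogeneous_C_mul_X _ _)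
    have hid : (aeval L).comp (aeval g) = AlgHom.id K (MvPolynomial (Fin (n + 1)) K) := by
      apply MvPolynomial.algHom_ext
      intro i
      rcases Fin.eq_self_or_eq_succAbove k i with rfl | ⟨j, rfl⟩
      · simp only [AlgHom.comp_apply, aeval_X, g, Fin.insertNth_apply_same, map_mul, L, algHom_C,
          algebraMap_eq, l0, AlgHom.id_apply]
        rw [← mul_assoc, ← C_mul, mul_inv_cancel₀ hk, C_1, one_mul]
      · simp [g, L, l, algebraMap_eq]
    have hfe : f = aeval L (aeval g f) := (AlgHom.congr_fun hid f).symm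
    rw [hfe, (aeval g f).as_sum, map_sum]
    apply Submodule.sum_mem
    intro b hb
    have hdeg : b.degree = t := by
      have := hF.degree_eq_sum_deg_support hb
      rw [one_mul] at this
      rw [Finsupp.degree_apply]
      omega
    rw [aeval_monomial, ← Algebra.smul_def]
    apply Submodule.smul_mem
    apply Submodule.subset_span
    refine ⟨b k, Finsupp.equivFunOnFinite.symm fun j => b (k.succAbove j), ?_, ?_⟩
    · rw [← hdeg, Finsupp.degree_eq_sum, Finsupp.degree_eq_sum, Fin.sum_univ_succAbove _ k]
      simp
    · rw [Finsupp.prod_fintype _ _ (by simp), Finsupp.prod_fintype _ _ (by simp),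
        Fin.prod_univ_succAbove _ k]
      simp [L]

namespace Chart

variable {K : Type} [Field K] {n : ℕ} {p : Fin (n + 1) → K} (c : Chart p)

lemma homog_prod (a : Fin n →₀ ℕ) :
    (a.prod fun j e => c.l j ^ e).IsHomogeneous a.degree := by
  rw [Finsupp.prod, Finsupp.degree_apply]
  apply IsHomogeneous.prod
  intro i _
  simpa using (c.h i).pow (a i)

lemma psi_prod (a : Fin n →₀ ℕ) :
    c.psi (a.prod fun j e => c.l j ^ e) = monomial a 1 := by
  rw [monomial_eq, C_1, one_mul, Finsupp.prod, map_prod, Finsupp.prod]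
  simp [c.psil]

lemma fwd {m : ℕ} {f : MvPolynomial (Fin (n + 1)) K} (hf : f ∈ pointIdeal p ^ m) :
    c.psi f ∈ idealOfVars (Fin n) K ^ m := by
  have h1 : (pointIdeal p).map c.psi ≤ idealOfVars (Fin n) K := by
    rw [pointIdeal, Ideal.map_span, Ideal.span_le]
    rintro _ ⟨g, ⟨_, hg⟩, rfl⟩
    have := (mem_pow_idealOfVars_iff' 1 (c.psi g)).2 (by
      intro x hx
      have : x = 0 := by rw [← Finsupp.degree_eq_zero_iff]; omega
      subst this
      rw [← constantCoeff_eq, c.psic, hg])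
    simpa using this
  have h2 := Ideal.mem_map_of_mem c.psi hf
  rw [Ideal.map_pow] at h2
  exact Ideal.pow_right_mono h1 m h2

lemma bwd {m t : ℕ} {f : MvPolynomial (Fin (n + 1)) K} (hf : f.IsHomogeneous t)
    (hm : c.psi f ∈ idealOfVars (Fin n) K ^ m) : f ∈ pointIdeal p ^ m := by
  let H : MvPolynomial (Fin n) K →ₗ[K] MvPolynomial (Fin (n + 1)) K :=
    (basisMonomials (Fin n) K).constr K
      fun a => c.l0 ^ (t - a.degree) * a.prod fun j e => c.l j ^ e
  have hH : ∀ a, H (monomial a 1) = c.l0 ^ (t - a.degree) * a.prod fun j e => c.l j ^ e := by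
    intro a
    have := (basisMonomials (Fin n) K).constr_basis K
      (fun a : Fin n →₀ ℕ => c.l0 ^ (t - a.degree) * a.prod fun j e => c.l j ^ e) a
    rwa [coe_basisMonomials] at this
  have key : H (c.psi f) = f := by
    have := c.spn t f hf
    clear hm hf
    induction this using Submodule.span_induction with
    | mem x hx =>
      obtain ⟨d, a, hd, rfl⟩ := hx
      rw [map_mul, map_pow, c.psi0, one_pow, one_mul, c.psi_prod, hH]
      congr 2
      omega
    | zero => simp
    | add x y _ _ hx hy => rw [map_add, map_add, hx, hy]
    | smul r x _ hx => rw [map_smul, map_smul, hx]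
  rw [← key, (c.psi f).as_sum, map_sum]
  apply Ideal.sum_mem
  intro a ha
  have hle : m ≤ a.degree := (mem_pow_idealOfVars_iff m _).1 hm a ha
  have : monomial a (coeff a (c.psi f)) = coeff a (c.psi f) • monomial a (1 : K) := by
    simp [smul_monomial]
  rw [this, map_smul, hH]
  rw [Algebra.smul_def]
  apply Ideal.mul_mem_left
  apply Ideal.mul_mem_left
  apply Ideal.pow_le_pow_right hle
  rw [Finsupp.prod, Finsupp.degree_apply, ← Finset.prod_pow_eq_pow_sum]
  apply Ideal.prod_mem_prod
  intro i _
  have hl : c.l i ∈ pointIdeal p := Ideal.subset_span ⟨c.h i, c.e i⟩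
  exact Ideal.pow_mem_pow hl _

end Chart

lemma exists_sep {K : Type} [Field K] {N : ℕ} (p q : Fin N → K) (hq : q ≠ 0)
    (h : ∀ c : K, p ≠ c • q) :
    ∃ L : MvPolynomial (Fin N) K, L.IsHomogeneous 1 ∧ eval q L = 0 ∧ eval p L ≠ 0 := by
  obtain ⟨r, hr⟩ : ∃ r, q r ≠ 0 := by
    by_contra! h'
    exact hq (funext h')
  by_contra! hL
  apply h (p r / q r)
  funext i
  have := hL (C (q r) * X i - C (q i) * X r)
    ((isHomogeneous_C_mul_X _ _).sub (isHomogeneous_C_mul_X _ _)) (by simp; ring)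
  simp only [map_sub, map_mul, eval_C, eval_X] at this
  simp only [Pi.smul_apply, smul_eq_mul]
  field_simp
  linear_combination this

/-- Exponents of degree less than `m`. -/
abbrev lowDegree (n m : ℕ) : Finset (Fin n →₀ ℕ) :=
  (Finset.range m).biUnion fun d => (Finset.univ : Finset (Fin n)).finsuppAntidiag d

/-- All the low order coefficients in the charts. -/
def jets {K : Type} [Field K] {n s : ℕ} {p : Fin s → Fin (n + 1) → K} (c : ∀ i, Chart (p i))
    (m : Fin s → ℕ) :
    MvPolynomial (Fin (n + 1)) K →ₗ[K] ((Σ i, lowDegree n (m i)) → K) :=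
  LinearMap.pi fun x => (lcoeff K x.2.1).comp (c x.1).psi.toLinearMap

lemma jets_apply {K : Type} [Field K] {n s : ℕ} {p : Fin s → Fin (n + 1) → K}
    (c : ∀ i, Chart (p i)) (m : Fin s → ℕ) (f) (x : Σ i, lowDegree n (m i)) :
    jets c m f x = coeff x.2.1 ((c x.1).psi f) := rfl

lemma jets_eq_zero {K : Type} [Field K] {n s : ℕ} {p : Fin s → Fin (n + 1) → K}
    (c : ∀ i, Chart (p i)) (m : Fin s → ℕ) {t : ℕ} (f) (hf : f.IsHomogeneous t) :
    jets c m f = 0 ↔ f ∈ fatIdeal p m := by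
  rw [fatIdeal, Ideal.mem_iInf]
  constructor
  · intro h i
    apply (c i).bwd hf
    rw [mem_pow_idealOfVars_iff']
    intro a ha
    exact congrFun h ⟨i, a, (mem_lowDegree _ _ _).2 ha⟩
  · intro h
    funext x
    have := (c x.1).fwd (h x.1)
    rw [mem_pow_idealOfVars_iff'] at this
    exact this _ ((mem_lowDegree _ _ _).1 x.2.2)

lemma hilb_iff {K : Type} [Field K] {n s : ℕ} {p : Fin s → Fin (n + 1) → K}
    (c : ∀ i, Chart (p i)) (m : Fin s → ℕ) (hm : ∀ i, 0 < m i) (t : ℕ) :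
    hilbFn K (fatIdeal p m) t = fatMult n m ↔
      ∀ w, ∃ f : MvPolynomial (Fin (n + 1)) K, f.IsHomogeneous t ∧ jets c m f = w := by
  set V := homogeneousSubmodule (Fin (n + 1)) K t with hV
  have : Module.Finite K V := Module.Finite.iff_fg.2 (homogeneousSubmodule_fg ..)
  let T := (jets c m).comp V.subtype
  have hker : LinearMap.ker T = Submodule.comap V.subtype ((fatIdeal p m).restrictScalars K) := by
    ext ⟨f, hf⟩
    simp only [LinearMap.mem_ker, Submodule.mem_comap, T, LinearMap.comp_apply,
      Submodule.subtype_apply, Submodule.restrictScalars_mem]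
    exact jets_eq_zero c m f hf
  have hg : gradedDim K (fatIdeal p m) t = Module.finrank K (LinearMap.ker T) := by
    rw [hker, gradedDim, ← Submodule.map_comap_subtype, Submodule.finrank_map_subtype_eq]
  have hh : hilbFn K (fatIdeal p m) t = Module.finrank K (LinearMap.range T) := by
    rw [hilbFn, hg, ← hV]
    have := T.finrank_range_add_finrank_ker
    omega
  have he : fatMult n m = Module.finrank K ((Σ i, lowDegree n (m i)) → K) := by
    rw [Module.finrank_pi, Fintype.card_sigma, fatMult]
    apply Finset.sum_congr rfl
    intro i _
    rw [Fintype.card_coe, card_lowDegree n _ (hm i)]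
  rw [hh, he]
  constructor
  · intro h w
    have := Submodule.eq_top_of_finrank_eq h
    have hw : w ∈ LinearMap.range T := this ▸ Submodule.mem_top
    obtain ⟨⟨f, hf⟩, hfw⟩ := hw
    exact ⟨f, hf, hfw⟩
  · intro h
    have : LinearMap.range T = ⊤ := by
      rw [LinearMap.range_eq_top]
      intro w
      obtain ⟨f, hf, hfw⟩ := h w
      exact ⟨⟨f, hf⟩, hfw⟩
    rw [this, finrank_top]

lemma exists_large {K : Type} [Field K] {n s : ℕ} {p : Fin s → Fin (n + 1) → K}
    (hdist : ProjDistinct p) (c : ∀ i, Chart (p i)) (m : Fin s → ℕ) :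
    ∃ t, ∀ w, ∃ f : MvPolynomial (Fin (n + 1)) K, f.IsHomogeneous t ∧ jets c m f = w := by
  classical
  have hL : ∀ i j, ∃ L : MvPolynomial (Fin (n + 1)) K, L.IsHomogeneous 1 ∧
      (j ≠ i → eval (p j) L = 0) ∧ eval (p i) L ≠ 0 := by
    intro i j
    by_cases hij : j = i
    · exact ⟨(c i).l0, (c i).h0, fun h => absurd hij h, by simp [(c i).e0]⟩
    · obtain ⟨L, h1, h2, h3⟩ := exists_sep (p i) (p j) (hdist.1 j) (hdist.2 i j (Ne.symm hij))
      exact ⟨L, h1, fun _ => h2, h3⟩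
  choose L hL1 hL2 hL3 using hL
  set M := ∑ j, m j with hM
  have hmM : ∀ i, m i ≤ M := fun i => Finset.single_le_sum (fun _ _ => Nat.zero_le _) (Finset.mem_univ i)
  refine ⟨M * M + M, ?_⟩
  -- basis vectors suffice
  have main : ∀ x : Σ i, lowDegree n (m i), ∃ f : MvPolynomial (Fin (n + 1)) K,
      f.IsHomogeneous (M * M + M) ∧ jets c m f = Pi.single x 1 := by
    rintro ⟨i, a, ha⟩
    have ha' := (mem_lowDegree _ _ _).1 ha
    let G := ∏ j, L i j ^ m j
    have hG : G.IsHomogeneous M := by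
      apply IsHomogeneous.prod
      intro j _
      simpa using (hL1 i j).pow (m j)
    have hGe : eval (p i) G ≠ 0 := by
      simp only [G, map_prod, map_pow]
      exact Finset.prod_ne_zero_iff.2 fun j _ => pow_ne_zero _ (hL3 i j)
    let E := (c i).l0 ^ M - C (eval (p i) G)⁻¹ * G
    have h0M : ((c i).l0 ^ M).IsHomogeneous M := by simpa using (c i).h0.pow M
    have hE : E.IsHomogeneous M := h0M.sub (hG.C_mul _)
    have hEm : (c i).psi E ∈ idealOfVars (Fin n) K := by
      have := (mem_pow_idealOfVars_iff' 1 ((c i).psi E)).2 (by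
        intro x hx
        have : x = 0 := by rw [← Finsupp.degree_eq_zero_iff]; omega
        subst this
        rw [← constantCoeff_eq, (c i).psic]
        simp [E, (c i).e0, hGe])
      simpa using this
    let H := ((c i).l0 ^ M) ^ M - E ^ M
    have hH : H.IsHomogeneous (M * M) := (h0M.pow M).sub (hE.pow M)
    have hdvd : G ∣ H := by
      refine dvd_trans ?_ (sub_dvd_pow_sub_pow _ _ M)
      simp [E]
    let b := (c i).l0 ^ (M - a.degree) * a.prod fun j e => (c i).l j ^ e
    have hb : b.IsHomogeneous M := by
      have := ((c i).h0.pow (M - a.degree)).mul ((c i).homog_prod a)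
      have h2 : 1 * (M - a.degree) + a.degree = M := by
        have := hmM i
        omega
      rwa [h2] at this
    refine ⟨H * b, hH.mul hb, ?_⟩
    funext ⟨j, a', ha2⟩
    rw [jets_apply]
    have ha2' := (mem_lowDegree _ _ _).1 ha2
    by_cases hij : j = i
    · subst hij
      have hpsi : (c j).psi (H * b) = monomial a 1 - (c j).psi E ^ M * monomial a 1 := by
        simp only [H, b, map_mul, map_sub, map_pow, (c j).psi0, one_pow, one_mul, (c j).psi_prod]
        ring
      have hmem : (c j).psi E ^ M * monomial a 1 ∈ idealOfVars (Fin n) K ^ (m j) :=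
        Ideal.mul_mem_right _ _ (Ideal.pow_le_pow_right (hmM j) (Ideal.pow_mem_pow hEm M))
      rw [mem_pow_idealOfVars_iff'] at hmem
      dsimp only
      rw [hpsi, coeff_sub, hmem a' ha2', sub_zero, coeff_monomial, Pi.single_apply]
      simp [eq_comm]
    · have hmem : H * b ∈ pointIdeal (p j) ^ m j := by
        apply Ideal.mul_mem_right
        apply Ideal.mem_of_dvd _ hdvd
        apply Ideal.mem_of_dvd _ (Finset.dvd_prod_of_mem (fun j => L i j ^ m j) (Finset.mem_univ j))
        have : L i j ∈ pointIdeal (p j) := Ideal.subset_span ⟨hL1 i j, hL2 i j hij⟩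
        exact Ideal.pow_mem_pow this _
      have := (c j).fwd hmem
      rw [mem_pow_idealOfVars_iff'] at this
      dsimp only
      rw [this a' ha2', Pi.single_eq_of_ne]
      intro h
      exact hij (congrArg Sigma.fst h)
  choose F hF1 hF2 using main
  intro w
  refine ⟨∑ x, w x • F x, ?_, ?_⟩
  · exact Submodule.sum_mem (homogeneousSubmodule (Fin (n + 1)) K (M * M + M))
      fun x _ => Submodule.smul_mem _ _ (hF1 x)
  · rw [map_sum]
    simp only [map_smul, hF2]
    funext y
    simp [Finset.sum_apply, Pi.single_apply]

lemma lower {K : Type} [Field K] {n s : ℕ} {p : Fin s → Fin (n + 1) → K}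
    (hdist : ProjDistinct p) (c : ∀ i, Chart (p i)) (m : Fin s → ℕ) (i j : Fin s) (hij : i ≠ j)
    (hm : ∀ i, 0 < m i) (t : ℕ)
    (hT : ∀ w, ∃ f : MvPolynomial (Fin (n + 1)) K, f.IsHomogeneous t ∧ jets c m f = w) :
    m i + m j - 1 ≤ t := by
  classical
  by_contra! hlt
  obtain ⟨L, hL1, hL2, hL3⟩ := exists_sep (p j) (p i) (hdist.1 i) (hdist.2 j i hij.symm)
  obtain ⟨f, hf, hfw⟩ := hT (fun x => if x.1 = i then jets c m (L ^ (m i - 1)) x else 0)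
  have hfi : ∀ a, a.degree < m i → coeff a ((c i).psi f) = coeff a ((c i).psi (L ^ (m i - 1))) := by
    intro a ha
    have := congrFun hfw ⟨i, a, (mem_lowDegree _ _ _).2 ha⟩
    simpa [jets_apply] using this
  have hfj : f ∈ pointIdeal (p j) ^ m j := by
    apply (c j).bwd hf
    rw [mem_pow_idealOfVars_iff']
    intro a ha
    have := congrFun hfw ⟨j, a, (mem_lowDegree _ _ _).2 ha⟩
    simpa [jets_apply, hij.symm] using this
  obtain ⟨r, k, hrk, hk⟩ : ∃ r k, t + r = k + (m i - 1) ∧ k < m j := by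
    have := hm i
    have := hm j
    refine ⟨m i - 1 - t, t + (m i - 1 - t) - (m i - 1), ?_, ?_⟩ <;> omega
  have hdiff : (c i).l0 ^ r * f - (c i).l0 ^ k * L ^ (m i - 1) ∈ pointIdeal (p i) ^ m i := by
    apply (c i).bwd (t := t + r)
    · apply IsHomogeneous.sub
      · have := ((c i).h0.pow r).mul hf
        rwa [one_mul, add_comm r t] at this
      · have := ((c i).h0.pow k).mul (hL1.pow (m i - 1))
        rwa [one_mul, one_mul, ← hrk] at this
    · rw [mem_pow_idealOfVars_iff']
      intro a ha
      simp only [map_sub, map_mul, map_pow, (c i).psi0, one_pow, one_mul, coeff_sub]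
      rw [hfi a ha, map_pow, sub_self]
  -- restriction to the line
  let ρ : MvPolynomial (Fin (n + 1)) K →ₐ[K] Polynomial (Polynomial K) :=
    aeval fun q => Polynomial.C (Polynomial.C (p i q) * Polynomial.X) +
      Polynomial.C (Polynomial.C (p j q)) * Polynomial.X
  have hρ : ∀ g : MvPolynomial (Fin (n + 1)) K, g.IsHomogeneous 1 →
      ρ g = Polynomial.C (Polynomial.C (eval (p i) g) * Polynomial.X) +
      Polynomial.C (Polynomial.C (eval (p j) g)) * Polynomial.X := by
    intro g hg
    have hg' : g ∈ Submodule.span K (Set.range (X : Fin (n + 1) → MvPolynomial (Fin (n + 1)) K)) := by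
      rw [← homogeneousSubmodule_one_eq_span_X]
      exact hg
    clear hg
    induction hg' using Submodule.span_induction with
    | mem x hx =>
      obtain ⟨q, rfl⟩ := hx
      simp [ρ]
    | zero => simp
    | add x y _ _ hx hy =>
      rw [map_add, hx, hy]
      simp only [map_add, add_mul]
      ring
    | smul a x _ hx =>
      rw [map_smul, hx, Algebra.smul_def, smul_eval, smul_eval]
      simp only [map_mul, Polynomial.algebraMap_apply, Algebra.algebraMap_self, RingHom.id_apply]
      ring
  have hi : ∀ N g, g ∈ pointIdeal (p i) ^ N → (Polynomial.X : Polynomial (Polynomial K)) ^ N ∣ ρ g := by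
    intro N g hg
    have h1 : (pointIdeal (p i)).map ρ ≤ Ideal.span {(Polynomial.X : Polynomial (Polynomial K))} := by
      rw [pointIdeal, Ideal.map_span, Ideal.span_le]
      rintro _ ⟨g, ⟨hg1, hg⟩, rfl⟩
      rw [SetLike.mem_coe, Ideal.mem_span_singleton, hρ g hg1, hg]
      simp
    have h2 := Ideal.mem_map_of_mem ρ hg
    rw [Ideal.map_pow] at h2
    have h3 := Ideal.pow_right_mono h1 N h2
    rwa [Ideal.span_singleton_pow, Ideal.mem_span_singleton] at h3
  have hj : ∀ N g, g ∈ pointIdeal (p j) ^ N →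
      Polynomial.C ((Polynomial.X : Polynomial K) ^ N) ∣ ρ g := by
    intro N g hg
    have h1 : (pointIdeal (p j)).map ρ ≤
        Ideal.span {Polynomial.C (Polynomial.X : Polynomial K)} := by
      rw [pointIdeal, Ideal.map_span, Ideal.span_le]
      rintro _ ⟨g, ⟨hg1, hg⟩, rfl⟩
      rw [SetLike.mem_coe, Ideal.mem_span_singleton, hρ g hg1, hg]
      simp
    have h2 := Ideal.mem_map_of_mem ρ hg
    rw [Ideal.map_pow] at h2
    have h3 := Ideal.pow_right_mono h1 N h2
    rwa [Ideal.span_singleton_pow, Ideal.mem_span_singleton, ← map_pow] at h3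
  obtain ⟨u, hu⟩ := hi _ _ hdiff
  obtain ⟨v, hv⟩ := hj (m j) ((c i).l0 ^ r * f) (Ideal.mul_mem_left _ _ hfj)
  have hl0 := hρ _ (c i).h0
  have hLρ := hρ _ hL1
  rw [(c i).e0] at hl0
  rw [hL2] at hLρ
  simp only [map_zero, zero_mul, zero_add, map_one, one_mul] at hl0 hLρ
  rw [map_sub, hv, map_mul, map_pow ρ L, hLρ, map_pow ρ (c i).l0, hl0, mul_pow, ← mul_assoc] at hu
  have hco := congrArg (fun P => Polynomial.coeff P (m i - 1)) hu
  simp only [Polynomial.coeff_sub, Polynomial.coeff_C_mul] at hco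
  rw [Polynomial.coeff_X_pow_mul', if_neg (by have := hm i; omega)] at hco
  have h5 := Polynomial.coeff_mul_X_pow ((Polynomial.C (Polynomial.X : Polynomial K) +
    Polynomial.C (Polynomial.C (eval (p j) (c i).l0)) * Polynomial.X) ^ k *
    Polynomial.C (Polynomial.C (eval (p j) L)) ^ (m i - 1)) (m i - 1) 0
  rw [zero_add] at h5
  rw [h5, Polynomial.coeff_zero_eq_eval_zero] at hco
  simp only [Polynomial.eval_mul, Polynomial.eval_pow, Polynomial.eval_add, Polynomial.eval_C,
    Polynomial.eval_X, mul_zero, add_zero] at hco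
  have h6 : (Polynomial.X : Polynomial K) ^ m j ∣
      Polynomial.X ^ k * Polynomial.C (eval (p j) L) ^ (m i - 1) :=
    ⟨_, (sub_eq_zero.1 hco).symm⟩
  rw [← map_pow, Polynomial.X_pow_dvd_iff] at h6
  have h7 := h6 k hk
  rw [Polynomial.coeff_mul_C, Polynomial.coeff_X_pow_self, one_mul] at h7
  exact pow_ne_zero _ hL3 h7

/-- Lemma 2.3 (CTV): `reg(R/I) ≥ m₁ + m₂ - 1`. -/
theorem stmt2 {K : Type} [Field K] [IsAlgClosed K] {n s : ℕ} (hs : 2 ≤ s)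
    (p : Fin s → Fin (n + 1) → K) (hdist : ProjDistinct p)
    (m : Fin s → ℕ) (hpos : ∀ i, 0 < m i)
    (hmono : ∀ i j : Fin s, i ≤ j → m j ≤ m i) :
    m ⟨0, by omega⟩ + m ⟨1, by omega⟩ - 1 ≤ regFat K p m := by 
  have c : ∀ i, Chart (p i) := fun i => (exists_chart (p i) (hdist.1 i)).some
  obtain ⟨t0, ht0⟩ := exists_large hdist c m
  rw [regFat, regIndex]
  apply le_csInf
  · exact ⟨t0, (hilb_iff c m hpos t0).2 ht0⟩
  · intro t ht
    exact lower hdist c m _ _ (by simp) hpos t ((hilb_iff c m hpos t).1 ht)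
end
end

section
/- Let X = {P_1,...,P_s} be distinct points in P^n with positive integers m_1,...,m_s, and put I = ℘_1^{m_1} ∩ ... ∩ ℘_s^{m_s}. If Y ⊆ X and J = ∩_{P_i ∈ Y} ℘_i^{m_i}, then reg(R/J) ≤ reg(R/I). -/
open MvPolynomial

noncomputable section

namespace FatAux

variable {K : Type} [Field K]

instance finR {N : ℕ} (t : ℕ) : FiniteDimensional K ↥(homogeneousSubmodule (Fin N) K t) :=
  Module.Finite.iff_fg.mpr (homogeneousSubmodule_fg _ _ t)

instance finI {N : ℕ} (I : Ideal (MvPolynomial (Fin N) K)) (t : ℕ) :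
    FiniteDimensional K ↥(homogeneousSubmodule (Fin N) K t ⊓ I.restrictScalars K) :=
  Submodule.finiteDimensional_of_le inf_le_left

lemma gradedDim_le {N : ℕ} (I : Ideal (MvPolynomial (Fin N) K)) (t : ℕ) :
    gradedDim K I t ≤ Module.finrank K ↥(homogeneousSubmodule (Fin N) K t) :=
  Submodule.finrank_mono inf_le_left

lemma finrank_hom (n t : ℕ) :
    Module.finrank K ↥(homogeneousSubmodule (Fin (n + 1)) K t) = (n + t).choose n := by
  have h : homogeneousSubmodule (Fin (n + 1)) K t
      = restrictSupport K {d | d.degree = t} :=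
    homogeneousSubmodule_eq_finsupp_supported _ _ t
  rw [h, Module.finrank_eq_nat_card_basis (basisRestrictSupport K _)]
  have h2 : ({d : Fin (n + 1) →₀ ℕ | d.degree = t}) =
      ↑(Finset.finsuppAntidiag (Finset.univ : Finset (Fin (n + 1))) t) := by
    ext d
    simp [Finsupp.degree_eq_sum]
  rw [h2, Nat.card_eq_card_toFinset]
  simp only [Finset.toFinset_coe]
  rw [Finset.card_finsuppAntidiag_nat_eq_choose]
  simp only [Finset.card_univ, Fintype.card_fin]
  rw [show n + 1 + t - 1 = n + t by omega, Nat.choose_symm_add]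

attribute [local instance] MvPolynomial.gradedAlgebra

lemma hom_point {N : ℕ} (p : Fin N → K) :
    (pointIdeal p).IsHomogeneous (homogeneousSubmodule (Fin N) K) := by
  refine Ideal.homogeneous_span _ _ ?_
  rintro f ⟨hf, -⟩
  exact ⟨1, hf⟩

lemma hom_pow {N : ℕ} {I : Ideal (MvPolynomial (Fin N) K)}
    (h : I.IsHomogeneous (homogeneousSubmodule (Fin N) K)) (m : ℕ) :
    (I ^ m).IsHomogeneous (homogeneousSubmodule (Fin N) K) := by
  induction m with
  | zero => simpa [Ideal.one_eq_top] using Ideal.IsHomogeneous.top _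
  | succ m ih => rw [pow_succ]; exact ih.mul h

lemma grade_sup {N t : ℕ} {I J : Ideal (MvPolynomial (Fin N) K)}
    (hI : I.IsHomogeneous (homogeneousSubmodule (Fin N) K))
    (hJ : J.IsHomogeneous (homogeneousSubmodule (Fin N) K))
    {f : MvPolynomial (Fin N) K} (hf : f.IsHomogeneous t) (h : f ∈ I ⊔ J) :
    ∃ a ∈ I, ∃ b ∈ J, a.IsHomogeneous t ∧ b.IsHomogeneous t ∧ f = a + b := by
  obtain ⟨a, ha, b, hb, hab⟩ := Submodule.mem_sup.mp h
  refine ⟨homogeneousComponent t a, homogeneousComponent_mem_of_mem hI ha t,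
    homogeneousComponent t b, homogeneousComponent_mem_of_mem hJ hb t,
    homogeneousComponent_isHomogeneous _ _, homogeneousComponent_isHomogeneous _ _, ?_⟩
  rw [← map_add, hab, homogeneousComponent_of_mem (m := t) (n := t) hf, if_pos rfl]

lemma weight_one_eq {N : ℕ} (d : Fin N →₀ ℕ) :
    (Finsupp.weight (1 : Fin N → ℕ)) d = d.degree := by
  rw [Finsupp.degree_eq_weight_one]; rfl

lemma finrank_map_inj {V W : Type*} [AddCommGroup V] [Module K V] [AddCommGroup W] [Module K W]
    {g : V →ₗ[K] W} (hg : Function.Injective g) (S : Submodule K V) :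
    Module.finrank K ↥(S.map g) = Module.finrank K ↥S :=
  (Submodule.equivMapOfInjective g hg S).finrank_eq.symm

lemma mem_vars_pow {N t : ℕ} {f : MvPolynomial (Fin N) K} (hf : f.IsHomogeneous t) :
    f ∈ idealOfVars (Fin N) K ^ t := by
  rw [mem_pow_idealOfVars_iff]
  intro d hd
  have := hf (mem_support_iff.mp hd)
  rw [weight_one_eq] at this
  exact this.ge

lemma linear_rep {N : ℕ} {f : MvPolynomial (Fin N) K} (hf : f.IsHomogeneous 1) :
    ∃ c : Fin N → K, f = ∑ j, c j • X j := by
  have : f ∈ homogeneousSubmodule (Fin N) K 1 := hf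
  rw [homogeneousSubmodule_one_eq_span_X, Submodule.mem_span_range_iff_exists_fun] at this
  obtain ⟨c, hc⟩ := this
  exact ⟨c, hc.symm⟩

lemma hom_lin {N : ℕ} (a b : K) (j k : Fin N) :
    (C a * X j - C b * X k : MvPolynomial (Fin N) K).IsHomogeneous 1 := by
  have h (a : K) (j : Fin N) : (C a * X j : MvPolynomial (Fin N) K).IsHomogeneous 1 := by
    simpa using (isHomogeneous_C (Fin N) a).mul (isHomogeneous_X K j)
  exact (h a j).sub (h b k)

lemma vars_le {N : ℕ} (p : Fin N → K) {I : Ideal (MvPolynomial (Fin N) K)}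
    {l : MvPolynomial (Fin N) K} (hl : l.IsHomogeneous 1) (hlp : eval p l ≠ 0) (hI : l ∈ I) :
    idealOfVars (Fin N) K ≤ I ⊔ pointIdeal p := by
  rw [idealOfVars, Ideal.span_le]
  rintro _ ⟨j, rfl⟩
  have e : (X j : MvPolynomial (Fin N) K) = C (p j / eval p l) * l + (X j - C (p j / eval p l) * l) := by
    ring
  rw [e]
  refine Submodule.add_mem_sup (I.mul_mem_left _ hI) (Ideal.subset_span ⟨?_, ?_⟩)
  · refine (isHomogeneous_X K j).sub ?_
    simpa using (isHomogeneous_C (Fin N) (p j / eval p l)).mul hl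
  · simp [hlp]

lemma sup_pow_le {A : Type*} [CommRing A] (I J : Ideal A) (t : ℕ) :
    (I ⊔ J) ^ t ≤ I ⊔ J ^ t := by
  induction t with
  | zero => simp
  | succ t ih =>
    rw [pow_succ, pow_succ]
    refine (Ideal.mul_mono_left ih).trans ?_
    rw [Ideal.sup_mul, Ideal.mul_sup, Ideal.mul_sup]
    refine sup_le (sup_le ?_ ?_) (sup_le ?_ ?_)
    · exact Ideal.mul_le_right.trans le_sup_left
    · exact Ideal.mul_le_left.trans le_sup_left
    · exact Ideal.mul_le_right.trans le_sup_left
    · exact le_sup_right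

lemma point_le_vars {N : ℕ} (p : Fin N → K) : pointIdeal p ≤ idealOfVars (Fin N) K := by
  rw [pointIdeal, Ideal.span_le]
  rintro f ⟨hf, -⟩
  simpa using mem_vars_pow hf

/-- `X_k` is a nonzerodivisor modulo `℘^m` when `p k ≠ 0`. -/
lemma sat {N : ℕ} (p : Fin N → K) (k : Fin N) (hk : p k ≠ 0) (m : ℕ)
    (f : MvPolynomial (Fin N) K) (h : X k * f ∈ pointIdeal p ^ m) : f ∈ pointIdeal p ^ m := by
  let α : MvPolynomial (Fin N) K →ₐ[K] Polynomial (MvPolynomial (Fin N) K) :=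
    aeval fun j => Polynomial.C (X j - C (p j / p k) * X k) + Polynomial.C (C (p j / p k)) * Polynomial.X
  have hαk : α (X k) = Polynomial.X := by simp [α, hk]
  have h1 : (pointIdeal p).map α ≤ (pointIdeal p).map Polynomial.C := by
    rw [Ideal.map_le_iff_le_comap]
    conv_lhs => rw [pointIdeal]
    rw [Ideal.span_le]
    rintro g ⟨hg, hgp⟩
    obtain ⟨c, hc⟩ := linear_rep hg
    have hz : ∑ j, c j * p j = 0 := by
      rw [hc] at hgp
      simpa [smul_eval] using hgp
    have hz' : ∑ j, c j * (p j / p k) = 0 := by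
      simp_rw [← mul_div_assoc, ← Finset.sum_div, hz, zero_div]
    have : α g = Polynomial.C g := by
      have e : α g = Polynomial.C g +
          Polynomial.C (C (∑ j, c j * (p j / p k))) * (Polynomial.X - Polynomial.C (X k)) := by
        rw [hc]
        simp only [map_sum, map_smul, Finset.sum_mul, ← Finset.sum_add_distrib]
        refine Finset.sum_congr rfl fun j _ => ?_
        simp only [α, aeval_X, map_mul, map_sub, smul_eq_C_mul, Algebra.smul_def]
        simp only [Polynomial.algebraMap_apply, MvPolynomial.algebraMap_eq]
        ring
      rw [e, hz']; simp
    change α g ∈ (pointIdeal p).map Polynomial.C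
    rw [this]
    exact Ideal.mem_map_of_mem _ (Ideal.subset_span ⟨hg, hgp⟩)
  have h2 : ∀ g ∈ pointIdeal p ^ m, α g ∈ (pointIdeal p ^ m).map Polynomial.C := by
    intro g hg
    have := Ideal.mem_map_of_mem α hg
    rw [Ideal.map_pow] at this
    rw [Ideal.map_pow]
    exact Ideal.pow_right_mono h1 m this
  have h3 := h2 _ h
  rw [map_mul, hαk, Ideal.mem_map_C_iff] at h3
  have h4 : ∀ i, (α f).coeff i ∈ pointIdeal p ^ m := by
    intro i
    simpa using h3 (i + 1)
  have h5 : (α f).eval (X k) = f := by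
    have : ((Polynomial.aeval (R := MvPolynomial (Fin N) K) (X k)).restrictScalars K).comp α
        = AlgHom.id K _ := by
      ext j
      simp [α]
    have := DFunLike.congr_fun this f
    simpa [Polynomial.aeval_def] using this
  rw [← h5, Polynomial.eval_eq_sum_range]
  exact Submodule.sum_mem _ fun i _ => Ideal.mul_mem_right _ _ (h4 i)

lemma hilb_step {N : ℕ} (p : Fin N → K) (hp : p ≠ 0) (m t : ℕ) (ht : m ≤ t + 1) :
    hilbFn K (pointIdeal p ^ m) (t + 1) = hilbFn K (pointIdeal p ^ m) t := by
  obtain ⟨k, hk⟩ := Function.ne_iff.mp hp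
  simp only [Pi.zero_apply] at hk
  set Q := pointIdeal p ^ m with hQ
  let μ : MvPolynomial (Fin N) K →ₗ[K] MvPolynomial (Fin N) K := LinearMap.mulLeft K (X k)
  have hμ : Function.Injective μ := fun a b h => mul_left_cancel₀ (X_ne_zero k) h
  have hdeg : ∀ g, (X k * g : MvPolynomial (Fin N) K).IsHomogeneous (t + 1) → g.IsHomogeneous t := by
    intro g hg d hd
    have := @hg (Finsupp.single k 1 + d) (by rwa [coeff_X_mul])
    rw [weight_one_eq] at this ⊢
    simp at this
    omega
  have hdeg' : ∀ g : MvPolynomial (Fin N) K, g.IsHomogeneous t → (X k * g).IsHomogeneous (t + 1) := by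
    intro g hg
    rw [add_comm]
    exact (isHomogeneous_X K k).mul hg
  have e1 : (homogeneousSubmodule (Fin N) K t).map μ ⊔
      (homogeneousSubmodule (Fin N) K (t + 1) ⊓ Q.restrictScalars K) =
      homogeneousSubmodule (Fin N) K (t + 1) := by
    apply le_antisymm
    · refine sup_le ?_ inf_le_left
      rintro _ ⟨g, hg, rfl⟩
      exact hdeg' g hg
    · intro f hf
      have h1 : f ∈ Ideal.span {X k} ⊔ Q := by
        have h2 := vars_le p (I := Ideal.span {X k}) (isHomogeneous_X K k) (by simpa using hk)
          (Ideal.mem_span_singleton_self _)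
        have h3 := Ideal.pow_right_mono h2 (t + 1) (mem_vars_pow hf)
        have h4 := sup_pow_le _ _ _ h3
        exact (sup_le_sup_left (Ideal.pow_le_pow_right ht) _ : Ideal.span {X k} ⊔ pointIdeal p ^ (t + 1) ≤ _) h4
      have hX : (Ideal.span {(X k : MvPolynomial (Fin N) K)}).IsHomogeneous
          (homogeneousSubmodule (Fin N) K) := by
        refine Ideal.homogeneous_span _ _ ?_
        rintro _ rfl
        exact ⟨1, isHomogeneous_X K k⟩
      obtain ⟨a, ha, b, hb, hat, hbt, rfl⟩ := grade_sup hX (hom_pow (hom_point p) m) hf h1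
      obtain ⟨g, rfl⟩ := Ideal.mem_span_singleton.mp ha
      exact Submodule.add_mem_sup ⟨g, hdeg g hat, rfl⟩ ⟨hbt, hb⟩
  have e2 : (homogeneousSubmodule (Fin N) K t).map μ ⊓
      (homogeneousSubmodule (Fin N) K (t + 1) ⊓ Q.restrictScalars K) =
      (homogeneousSubmodule (Fin N) K t ⊓ Q.restrictScalars K).map μ := by
    apply le_antisymm
    · rintro _ ⟨⟨g, hg, rfl⟩, -, h⟩
      exact ⟨g, ⟨hg, sat p k hk m g h⟩, rfl⟩
    · rintro _ ⟨g, ⟨hg, hq⟩, rfl⟩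
      exact ⟨⟨g, hg, rfl⟩, hdeg' g hg, Q.mul_mem_left _ hq⟩
  have e3 := Submodule.finrank_sup_add_finrank_inf_eq ((homogeneousSubmodule (Fin N) K t).map μ)
    (homogeneousSubmodule (Fin N) K (t + 1) ⊓ Q.restrictScalars K)
  rw [e1, e2, finrank_map_inj hμ, finrank_map_inj hμ] at e3
  have := gradedDim_le Q t
  have := gradedDim_le Q (t + 1)
  unfold hilbFn
  unfold gradedDim at *
  omega

lemma hilb_base {N : ℕ} (p : Fin N → K) (m t : ℕ) (ht : t < m) :
    hilbFn K (pointIdeal p ^ m) t = Module.finrank K ↥(homogeneousSubmodule (Fin N) K t) := by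
  have : homogeneousSubmodule (Fin N) K t ⊓ (pointIdeal p ^ m).restrictScalars K = ⊥ := by
    rw [eq_bot_iff]
    rintro f ⟨hf, hq⟩
    have h1 := Ideal.pow_right_mono (point_le_vars p) m hq
    rw [mem_pow_idealOfVars_iff] at h1
    rw [Submodule.mem_bot]
    by_contra hne
    obtain ⟨d, hd⟩ := ne_zero_iff.mp hne
    have h2 := h1 d (mem_support_iff.mpr hd)
    have h3 := hf hd
    rw [weight_one_eq] at h3
    change d.degree = t at h3
    omega
  rw [hilbFn, gradedDim, this, finrank_bot, Nat.sub_zero]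

lemma hilb_point_ge {n : ℕ} (p : Fin (n + 1) → K) (hp : p ≠ 0) (m t : ℕ) (hm : 0 < m)
    (ht : m ≤ t + 1) : hilbFn K (pointIdeal p ^ m) t = (m + n - 1).choose n := by
  obtain ⟨r, rfl⟩ : ∃ r, t = (m - 1) + r := ⟨t - (m - 1), by omega⟩
  clear ht
  induction r with
  | zero =>
    rw [hilb_base p m _ (by omega), finrank_hom]
    congr 1; omega
  | succ r ih => rw [← add_assoc, hilb_step p hp _ _ (by omega), ih]

lemma hilb_point_le {n : ℕ} (p : Fin (n + 1) → K) (hp : p ≠ 0) (m t : ℕ) (hm : 0 < m) :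
    hilbFn K (pointIdeal p ^ m) t ≤ (m + n - 1).choose n := by
  rcases le_or_gt m (t + 1) with h | h
  · exact (hilb_point_ge p hp m t hm h).le
  · rw [hilb_base p m t (by omega), finrank_hom]
    exact Nat.choose_le_choose n (by omega)

lemma hilb_top {N : ℕ} (t : ℕ) : hilbFn K (⊤ : Ideal (MvPolynomial (Fin N) K)) t = 0 := by
  have : homogeneousSubmodule (Fin N) K t ⊓
      (⊤ : Ideal (MvPolynomial (Fin N) K)).restrictScalars K = homogeneousSubmodule (Fin N) K t := by
    ext; simp
  rw [hilbFn, gradedDim, this, Nat.sub_self]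

lemma inf_eq {N : ℕ} (I J : Ideal (MvPolynomial (Fin N) K)) (t : ℕ) :
    homogeneousSubmodule (Fin N) K t ⊓ (I ⊓ J).restrictScalars K =
    (homogeneousSubmodule (Fin N) K t ⊓ I.restrictScalars K) ⊓
      (homogeneousSubmodule (Fin N) K t ⊓ J.restrictScalars K) := by
  ext f
  simp only [Submodule.mem_inf, Submodule.restrictScalars_mem]
  tauto

lemma hilb_inf_le {N : ℕ} (I J : Ideal (MvPolynomial (Fin N) K)) (t : ℕ) :
    hilbFn K (I ⊓ J) t ≤ hilbFn K I t + hilbFn K J t := by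
  have e := Submodule.finrank_sup_add_finrank_inf_eq
    (homogeneousSubmodule (Fin N) K t ⊓ I.restrictScalars K)
    (homogeneousSubmodule (Fin N) K t ⊓ J.restrictScalars K)
  rw [← inf_eq] at e
  have h : Module.finrank K ↥((homogeneousSubmodule (Fin N) K t ⊓ I.restrictScalars K) ⊔
    (homogeneousSubmodule (Fin N) K t ⊓ J.restrictScalars K)) ≤
      Module.finrank K ↥(homogeneousSubmodule (Fin N) K t) :=
    Submodule.finrank_mono (sup_le inf_le_left inf_le_left)
  have := gradedDim_le I t
  have := gradedDim_le J t
  unfold hilbFn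
  unfold gradedDim at *
  omega

lemma hilb_inf_eq {N : ℕ} {I J : Ideal (MvPolynomial (Fin N) K)} (t : ℕ)
    (hI : I.IsHomogeneous (homogeneousSubmodule (Fin N) K))
    (hJ : J.IsHomogeneous (homogeneousSubmodule (Fin N) K))
    (hsup : idealOfVars (Fin N) K ^ t ≤ I ⊔ J) :
    hilbFn K (I ⊓ J) t = hilbFn K I t + hilbFn K J t := by
  have e := Submodule.finrank_sup_add_finrank_inf_eq
    (homogeneousSubmodule (Fin N) K t ⊓ I.restrictScalars K)
    (homogeneousSubmodule (Fin N) K t ⊓ J.restrictScalars K)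
  rw [← inf_eq] at e
  have h : (homogeneousSubmodule (Fin N) K t ⊓ I.restrictScalars K) ⊔
    (homogeneousSubmodule (Fin N) K t ⊓ J.restrictScalars K) =
      homogeneousSubmodule (Fin N) K t := by
    apply le_antisymm (sup_le inf_le_left inf_le_left)
    intro f hf
    obtain ⟨a, ha, b, hb, hat, hbt, rfl⟩ := grade_sup hI hJ hf (hsup (mem_vars_pow hf))
    exact Submodule.add_mem_sup ⟨hat, ha⟩ ⟨hbt, hb⟩
  rw [h] at e
  have := gradedDim_le I t
  have := gradedDim_le J t
  have := gradedDim_le (I ⊓ J) t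
  unfold hilbFn
  unfold gradedDim at *
  omega

lemma vars_le_points {N : ℕ} (p q : Fin N → K) (hp : p ≠ 0) (hpq : ∀ c : K, q ≠ c • p) :
    idealOfVars (Fin N) K ≤ pointIdeal p ⊔ pointIdeal q := by
  obtain ⟨k, hk⟩ := Function.ne_iff.mp hp
  simp only [Pi.zero_apply] at hk
  obtain ⟨j, hj⟩ := Function.ne_iff.mp (hpq (q k / p k))
  refine vars_le q (l := C (p k) * X j - C (p j) * X k) (hom_lin _ _ _ _) ?_
    (Ideal.subset_span ⟨hom_lin _ _ _ _, ?_⟩)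
  · intro h
    simp at h
    apply hj
    simp only [Pi.smul_apply, smul_eq_mul]
    field_simp
    linear_combination h
  · simp; ring

lemma exists_sup {n s : ℕ} (p : Fin s → Fin (n + 1) → K) (hdist : ProjDistinct p)
    (m : Fin s → ℕ) (i : Fin s) (T : Finset (Fin s)) (hi : i ∉ T) :
    ∃ a, idealOfVars (Fin (n + 1)) K ^ a ≤
      pointIdeal (p i) ^ m i ⊔ (⨅ j ∈ T, pointIdeal (p j) ^ m j) := by
  classical
  induction T using Finset.induction_on with
  | empty => exact ⟨0, by simp⟩
  | insert j T hj ih =>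
    simp only [Finset.mem_insert, not_or] at hi
    obtain ⟨a, ha⟩ := ih hi.2
    have hb : idealOfVars (Fin (n + 1)) K ^ (m i + m j) ≤
        pointIdeal (p i) ^ m i ⊔ pointIdeal (p j) ^ m j :=
      (Ideal.pow_right_mono (vars_le_points (p i) (p j) (hdist.1 i)
        (hdist.2 j i (Ne.symm hi.1))) _).trans Ideal.sup_pow_add_le_pow_sup_pow
    refine ⟨(m i + m j) + a, ?_⟩
    rw [pow_add, Finset.iInf_insert]
    refine (Ideal.mul_mono hb ha).trans ?_
    rw [Ideal.sup_mul, Ideal.mul_sup, Ideal.mul_sup]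
    refine sup_le (sup_le ?_ ?_) (sup_le ?_ ?_)
    · exact Ideal.mul_le_right.trans le_sup_left
    · exact Ideal.mul_le_left.trans le_sup_left
    · exact Ideal.mul_le_right.trans le_sup_left
    · exact Ideal.mul_le_inf.trans le_sup_right

lemma hilb_le {n s : ℕ} (p : Fin s → Fin (n + 1) → K) (hdist : ProjDistinct p)
    (m : Fin s → ℕ) (hm : ∀ i, 0 < m i) (T : Finset (Fin s)) (t : ℕ) :
    hilbFn K (⨅ i ∈ T, pointIdeal (p i) ^ m i) t ≤ ∑ i ∈ T, (m i + n - 1).choose n := by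
  classical
  induction T using Finset.induction_on with
  | empty => simp [hilb_top]
  | insert j T hj ih =>
    rw [Finset.iInf_insert, Finset.sum_insert hj]
    exact (hilb_inf_le _ _ t).trans
      (add_le_add (hilb_point_le (p j) (hdist.1 j) (m j) t (hm j)) ih)

lemma hilb_eq {n s : ℕ} (p : Fin s → Fin (n + 1) → K) (hdist : ProjDistinct p)
    (m : Fin s → ℕ) (hm : ∀ i, 0 < m i) (T : Finset (Fin s)) :
    ∃ t₀, ∀ t, t₀ ≤ t →
      hilbFn K (⨅ i ∈ T, pointIdeal (p i) ^ m i) t = ∑ i ∈ T, (m i + n - 1).choose n := by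
  classical
  induction T using Finset.induction_on with
  | empty => exact ⟨0, fun t _ => by simp [hilb_top]⟩
  | insert j T hj ih =>
    obtain ⟨t₀, h₀⟩ := ih
    obtain ⟨a, ha⟩ := exists_sup p hdist m j T hj
    refine ⟨t₀ + a + m j, fun t ht => ?_⟩
    rw [Finset.iInf_insert, Finset.sum_insert hj,
      hilb_inf_eq t (hom_pow (hom_point _) _)
        (Ideal.IsHomogeneous.iInf₂ fun i _ => hom_pow (hom_point _) _)
        ((Ideal.pow_le_pow_right (by omega)).trans ha),
      hilb_point_ge (p j) (hdist.1 j) (m j) t (hm j) (by omega), h₀ t (by omega)]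

end FatAux

/-- Lemma 2.6 (Thien): if `Y ⊆ X` then `reg(R/J) ≤ reg(R/I)`. -/
theorem stmt3 {K : Type} [Field K] [IsAlgClosed K] {n s : ℕ}
    (p : Fin s → Fin (n + 1) → K) (hdist : ProjDistinct p)
    (m : Fin s → ℕ) (hm : ∀ i, 0 < m i) (T : Finset (Fin s)) :
    regIndex K (⨅ i ∈ T, pointIdeal (p i) ^ m i) (∑ i ∈ T, (m i + n - 1).choose n)
      ≤ regFat K p m := by
  classical
  have huniv : fatIdeal p m = ⨅ i ∈ (Finset.univ : Finset (Fin s)), pointIdeal (p i) ^ m i := by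
    simp [fatIdeal]
  obtain ⟨t₀, h₀⟩ := FatAux.hilb_eq p hdist m hm Finset.univ
  have hne : {t | hilbFn K (fatIdeal p m) t = fatMult n m}.Nonempty :=
    ⟨t₀, by rw [Set.mem_ofPred_eq, huniv]; exact h₀ t₀ le_rfl⟩
  have hmem := Nat.sInf_mem hne
  change regFat K p m ∈ _ at hmem
  rw [Set.mem_ofPred_eq, huniv] at hmem
  apply Nat.sInf_le
  rw [Set.mem_ofPred_eq]
  set t := regFat K p m
  apply le_antisymm (FatAux.hilb_le p hdist m hm T t)
  have hsplit : (⨅ i ∈ (Finset.univ : Finset (Fin s)), pointIdeal (p i) ^ m i) =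
      (⨅ i ∈ T, pointIdeal (p i) ^ m i) ⊓ (⨅ i ∈ Tᶜ, pointIdeal (p i) ^ m i) := by
    rw [← Finset.iInf_union, Finset.union_compl]
  have h1 := FatAux.hilb_inf_le (⨅ i ∈ T, pointIdeal (p i) ^ m i)
    (⨅ i ∈ Tᶜ, pointIdeal (p i) ^ m i) t
  have h2 := FatAux.hilb_le p hdist m hm Tᶜ t
  have h3 : ∑ i ∈ T, (m i + n - 1).choose n + ∑ i ∈ Tᶜ, (m i + n - 1).choose n = fatMult n m :=
    Finset.sum_add_sum_compl T _
  rw [← hsplit] at h1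
  omega
end
end

section
/- Let Z = 2P_1 + ... + 2P_{n+3} be a set of n+3 non-degenerate double points in P^n (P_1,...,P_{n+3} span P^n). Then reg(Z) = T(Z), where T(Z) = max{T_j(Z) : j=1,...,n} and T_j(Z) = max{⌊(2q + j - 2)/j⌋ : some q of the points lie on a j-dimensional linear subspace}. -/
open MvPolynomial

noncomputable section

section PartOne
variable {K : Type} [Field K]

/-- First order Taylor expansion modulo the square of an ideal. -/
lemma taylor_mod_sq {N : ℕ} {A : Type*} [CommRing A] [Algebra K A] (I : Ideal A)
    (a y : Fin N → A) (hy : ∀ j, y j ∈ I) (F : MvPolynomial (Fin N) K) :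
    aeval (fun j => a j + y j) F - aeval a F - ∑ j, aeval a (pderiv j F) * y j ∈ I ^ 2 := by
  induction F using MvPolynomial.induction_on with
  | C c => simp
  | add f g hf hg =>
    have := Ideal.add_mem _ hf hg
    convert this using 1
    simp only [map_add, add_mul, Finset.sum_add_distrib]
    ring
  | mul_X f k hf =>
    have h1 : (∑ j, aeval a (pderiv j f) * y j) * y k ∈ I ^ 2 := by
      rw [pow_two]
      exact Ideal.mul_mem_mul (Ideal.sum_mem _ fun j _ => Ideal.mul_mem_left _ _ (hy j)) (hy k)
    have h2 := Ideal.add_mem _ (Ideal.mul_mem_right (a k + y k) _ hf) h1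
    convert h2 using 1
    have h3 : ∑ j, aeval a (pderiv j (f * X k)) * y j =
        (∑ j, aeval a (pderiv j f) * y j) * a k + aeval a f * y k := by
      have : ∀ j, aeval a (pderiv j (f * X k)) * y j =
          aeval a (pderiv j f) * y j * a k + aeval a f * ((Pi.single j 1 : Fin N → A) k * y j) := by
        intro j
        rw [pderiv_mul, pderiv_X]
        by_cases h : k = j
        · subst h; simp; ring
        · simp [Pi.single_apply, h]; ring
      simp only [this, Finset.sum_add_distrib, ← Finset.sum_mul, ← Finset.mul_sum]
      congr 2
      simp [Pi.single_apply]
    rw [h3]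
    simp only [map_mul, aeval_X]
    ring

lemma aeval_smul_homog {N t : ℕ} {A : Type*} [CommRing A] [Algebra K A]
    {F : MvPolynomial (Fin N) K} (hF : F.IsHomogeneous t) (s : A) (p : Fin N → K) :
    aeval (fun j => s * algebraMap K A (p j)) F = s ^ t * algebraMap K A (eval p F) := by
  rw [aeval_def, eval₂_eq', eval_eq', map_sum, Finset.mul_sum]
  refine Finset.sum_congr rfl fun d hd => ?_
  have : ∑ i, d i = t := by
    have := hF.degree_eq_sum_deg_support hd
    rw [this]
    exact (Finsupp.sum_fintype d (fun _ x => x) (by simp)).symm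
  simp only [mul_pow, Finset.prod_mul_distrib, Finset.prod_pow_eq_pow_sum, this, map_mul, map_prod,
    map_pow]
  ring

lemma mem_pointIdeal_sq {N t : ℕ} {p : Fin N → K} (hp : p ≠ 0)
    {F : MvPolynomial (Fin N) K} (hF : F.IsHomogeneous t) :
    F ∈ pointIdeal p ^ 2 ↔ eval p F = 0 ∧ ∀ k, eval p (pderiv k F) = 0 := by
  constructor
  · intro h
    have hz : ∀ G ∈ pointIdeal p, eval p G = 0 := by
      intro G hG
      have : pointIdeal p ≤ RingHom.ker (eval p) := by
        rw [pointIdeal, Ideal.span_le]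
        rintro f ⟨_, hf⟩
        exact hf
      exact this hG
    rw [pow_two] at h
    refine Submodule.mul_induction_on h ?_ ?_
    · intro m hm n hn
      simp [pderiv_mul, hz m hm, hz n hn]
    · rintro x y ⟨hx, hx'⟩ ⟨hy, hy'⟩
      simp [hx, hx', hy, hy']
  · rintro ⟨h0, h1⟩
    obtain ⟨k, hk⟩ : ∃ k, p k ≠ 0 := by
      by_contra! h
      exact hp (funext h)
    set s : MvPolynomial (Fin N) K := C (p k)⁻¹ * X k with hs
    set y : Fin N → MvPolynomial (Fin N) K := fun j => X j - s * C (p j) with hy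
    have hyI : ∀ j, y j ∈ pointIdeal p := by
      intro j
      refine Ideal.subset_span ⟨?_, ?_⟩
      · refine (isHomogeneous_X _ _).sub ?_
        rw [hs]
        have := ((isHomogeneous_C_mul_X (p k)⁻¹ k).mul (isHomogeneous_C (Fin N) (p j)))
        simpa using this
      · simp [hy, hs, hk]
    have := taylor_mod_sq (K := K) (pointIdeal p) (fun j => s * algebraMap K _ (p j)) y hyI F
    rw [aeval_smul_homog hF, h0] at this
    have h2 : ∀ j, aeval (fun j => s * algebraMap K (MvPolynomial (Fin N) K) (p j)) (pderiv j F)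
        = 0 := by
      intro j
      rw [aeval_smul_homog hF.pderiv, h1]
      simp
    simp only [h2] at this
    have h3 : (fun j => s * algebraMap K (MvPolynomial (Fin N) K) (p j) + y j) = X := by
      funext j
      simp [hy, algebraMap_eq]
    rw [h3] at this
    simpa using this

/-- every compatible family of first order jets at the `p i` is the family of jets of
a form of degree `t` -/
def JetSurj {ι : Type} {N : ℕ} (p : ι → Fin N → K) (t : ℕ) : Prop :=
  ∀ (c : ι → K) (φ : ι → Fin N → K), (∀ i, ∑ k, p i k * φ i k = t * c i) →
    ∃ F : MvPolynomial (Fin N) K, F.IsHomogeneous t ∧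
      ∀ i, eval (p i) F = c i ∧ ∀ k, eval (p i) (pderiv k F) = φ i k

/-- the jet map -/
def jetMap {ι : Type} {N : ℕ} (p : ι → Fin N → K) (t : ℕ) :
    homogeneousSubmodule (Fin N) K t →ₗ[K] (ι → K × (Fin N → K)) where
  toFun F i := (eval (p i) F.1, fun k => eval (p i) (pderiv k F.1))
  map_add' F G := by ext <;> simp
  map_smul' c F := by ext <;> simp [smul_eval]

/-- the Euler relations -/
def eulerMap {ι : Type} {N : ℕ} (p : ι → Fin N → K) (t : ℕ) :
    (ι → K × (Fin N → K)) →ₗ[K] (ι → K) where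
  toFun x i := ∑ k, p i k * (x i).2 k - t * (x i).1
  map_add' x y := by
    ext i
    simp only [Pi.add_apply, Prod.snd_add, Prod.fst_add, mul_add, Finset.sum_add_distrib]
    ring
  map_smul' c x := by
    ext i
    have h1 : ((c • x) i).1 = c * (x i).1 := rfl
    have h2 : ∀ k, ((c • x) i).2 k = c * (x i).2 k := fun _ => rfl
    change ∑ k, p i k * ((c • x) i).2 k - t * ((c • x) i).1 =
      c * (∑ k, p i k * (x i).2 k - t * (x i).1)
    simp only [h1, h2, mul_sub, Finset.mul_sum]
    congr 1
    · exact Finset.sum_congr rfl fun _ _ => by ring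
    · ring

lemma eulerMap_surj {ι : Type} {N : ℕ} (p : ι → Fin N → K) (hp : ∀ i, p i ≠ 0) (t : ℕ) :
    Function.Surjective (eulerMap p t) := by
  intro c
  have : ∀ i, ∃ k, p i k ≠ 0 := by
    intro i
    by_contra! h
    exact hp i (funext h)
  choose k hk using this
  refine ⟨fun i => (0, Pi.single (k i) (c i / p i (k i))), ?_⟩
  ext i
  simp [eulerMap, Pi.single_apply, mul_div_cancel₀, hk]

lemma finrank_ker_eulerMap {ι : Type} [Fintype ι] {N : ℕ} (p : ι → Fin N → K)
    (hp : ∀ i, p i ≠ 0) (t : ℕ) :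
    Module.finrank K (LinearMap.ker (eulerMap p t)) = Fintype.card ι * N := by
  have h := LinearMap.finrank_range_add_finrank_ker (eulerMap p t)
  rw [LinearMap.range_eq_top.2 (eulerMap_surj p hp t), finrank_top] at h
  simp [Module.finrank_pi_fintype] at h
  rw [mul_add, mul_one] at h
  omega

lemma range_jetMap_le {ι : Type} {N : ℕ} (p : ι → Fin N → K) (t : ℕ) :
    LinearMap.range (jetMap p t) ≤ LinearMap.ker (eulerMap p t) := by
  rintro _ ⟨F, rfl⟩
  rw [LinearMap.mem_ker]
  ext i
  have := congrArg (eval (p i)) (IsHomogeneous.sum_X_mul_pderiv F.2)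
  simp [map_sum] at this
  simp [eulerMap, jetMap, this]

lemma jetSurj_iff {ι : Type} {N : ℕ} (p : ι → Fin N → K) (t : ℕ) :
    JetSurj p t ↔ LinearMap.range (jetMap p t) = LinearMap.ker (eulerMap p t) := by
  constructor
  · intro h
    refine le_antisymm (range_jetMap_le p t) ?_
    intro x hx
    rw [LinearMap.mem_ker] at hx
    obtain ⟨F, hF, hF'⟩ := h (fun i => (x i).1) (fun i => (x i).2) (by
      intro i
      have := congrFun hx i
      simpa [eulerMap, sub_eq_zero] using this)
    refine ⟨⟨F, hF⟩, ?_⟩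
    ext i k
    · exact (hF' i).1
    · exact (hF' i).2 k
  · intro h c φ hc
    have : (fun i => (c i, φ i)) ∈ LinearMap.range (jetMap p t) := by
      rw [h, LinearMap.mem_ker]
      ext i
      simp [eulerMap, hc]
    obtain ⟨F, hF⟩ := this
    refine ⟨F.1, F.2, fun i => ?_⟩
    have := congrFun hF i
    simp only [jetMap, LinearMap.coe_mk, AddHom.coe_mk, Prod.mk.injEq] at this
    exact ⟨this.1, fun k => congrFun this.2 k⟩

instance finDimHom (N t : ℕ) : FiniteDimensional K (homogeneousSubmodule (Fin N) K t) :=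
  Module.Finite.iff_fg.2 (homogeneousSubmodule_fg (Fin N) K t)

lemma finrank_hom (N t : ℕ) :
    Module.finrank K (homogeneousSubmodule (Fin N) K t) = (N + t - 1).choose t := by
  have e : homogeneousSubmodule (Fin N) K t =
      restrictSupport K {d : Fin N →₀ ℕ | d.degree = t} := by
    rw [homogeneousSubmodule_eq_finsupp_supported]; rfl
  have hs : {d : Fin N →₀ ℕ | d.degree = t} = ↑(Finset.univ.finsuppAntidiag t : Finset (Fin N →₀ ℕ)) := by
    ext d
    simp [Finset.mem_finsuppAntidiag, Finsupp.degree_eq_sum]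
  rw [e, Module.finrank_eq_nat_card_basis (basisRestrictSupport K _), hs]
  rw [Nat.card_coe_set_eq, Set.ncard_coe_finset, Finset.card_finsuppAntidiag_nat_eq_choose]
  simp

lemma jetSurj_card {ι : Type} [Fintype ι] {N : ℕ} {p : ι → Fin N → K}
    (hp : ∀ i, p i ≠ 0) {t : ℕ} (h : JetSurj p t) :
    Fintype.card ι * N + Module.finrank K (LinearMap.ker (jetMap p t)) = (N + t - 1).choose t := by
  rw [← finrank_hom (K := K), ← LinearMap.finrank_range_add_finrank_ker (jetMap p t),
    (jetSurj_iff p t).1 h, finrank_ker_eulerMap p hp]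

lemma jetSurj_card_le {ι : Type} [Fintype ι] {N : ℕ} {p : ι → Fin N → K}
    (hp : ∀ i, p i ≠ 0) {t : ℕ} (h : JetSurj p t) :
    Fintype.card ι * N ≤ (N + t - 1).choose t := by
  have := jetSurj_card hp h
  omega

lemma jetSurj_card_lt {ι : Type} [Fintype ι] {N : ℕ} {p : ι → Fin N → K}
    (hp : ∀ i, p i ≠ 0) {t : ℕ} (h : JetSurj p t) (F : MvPolynomial (Fin N) K)
    (hF : F.IsHomogeneous t) (hF0 : F ≠ 0)
    (hz : ∀ i, eval (p i) F = 0 ∧ ∀ k, eval (p i) (pderiv k F) = 0) :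
    Fintype.card ι * N < (N + t - 1).choose t := by
  have := jetSurj_card hp h
  have : 0 < Module.finrank K (LinearMap.ker (jetMap p t)) := by
    refine (Module.finrank_pos_iff_exists_ne_zero (R := K)
      (M := LinearMap.ker (jetMap p t))).2 ?_
    refine ⟨⟨⟨F, hF⟩, ?_⟩, ?_⟩
    · rw [LinearMap.mem_ker]
      ext i k
      · exact (hz i).1
      · exact (hz i).2 k
    · intro hh
      apply hF0
      simpa using congrArg (fun x => x.1.1) hh
  omega

lemma hilb_iff_s10 {n s : ℕ} (p : Fin s → Fin (n + 1) → K) (hp : ∀ i, p i ≠ 0) (t : ℕ) :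
    hilbFn K (fatIdeal p (fun _ => 2)) t = fatMult n (fun _ : Fin s => 2) ↔ JetSurj p t := by
  have hm : fatMult n (fun _ : Fin s => 2) = s * (n + 1) := by
    have : 2 + n - 1 = n + 1 := by omega
    simp [fatMult, this, Nat.choose_succ_self_right]
  have hker : gradedDim K (fatIdeal p (fun _ => 2)) t =
      Module.finrank K (LinearMap.ker (jetMap p t)) := by
    rw [gradedDim]
    have : (homogeneousSubmodule (Fin (n+1)) K t ⊓
        (fatIdeal p (fun _ => 2)).restrictScalars K) =
        (LinearMap.ker (jetMap p t)).map (homogeneousSubmodule (Fin (n+1)) K t).subtype := by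
      ext F
      simp only [Submodule.mem_inf, Submodule.restrictScalars_mem, Submodule.mem_map,
        LinearMap.mem_ker, Submodule.subtype_apply, Subtype.exists, exists_and_right,
        exists_eq_right, fatIdeal, Submodule.mem_iInf]
      constructor
      · rintro ⟨h1, h2⟩
        refine ⟨h1, ?_⟩
        ext i k
        · exact ((mem_pointIdeal_sq (hp i) h1).1 (h2 i)).1
        · exact ((mem_pointIdeal_sq (hp i) h1).1 (h2 i)).2 k
      · rintro ⟨h1, h2⟩
        refine ⟨h1, fun i => (mem_pointIdeal_sq (hp i) h1).2 ?_⟩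
        have := congrFun h2 i
        simp only [jetMap, LinearMap.coe_mk, AddHom.coe_mk, Pi.zero_apply] at this
        exact ⟨congrArg Prod.fst this, fun k => congrFun (congrArg Prod.snd this) k⟩
    rw [this, Submodule.finrank_map_subtype_eq]
  have hr := LinearMap.finrank_range_add_finrank_ker (jetMap p t)
  rw [hilbFn, hker, hm, ← hr, Nat.add_sub_cancel, jetSurj_iff]
  have hE := finrank_ker_eulerMap p hp t
  rw [Fintype.card_fin] at hE
  rw [← hE]
  constructor
  · intro h
    exact Submodule.eq_of_le_of_finrank_eq (range_jetMap_le p t) h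
  · intro h
    rw [h]

end PartOne
section PartTwo
variable {K : Type} [Field K]

/-- Rado's theorem on independent transversals, for labelled families of vectors. -/
lemma rado_aux {ι κ V : Type} [Fintype ι] [AddCommGroup V] [Module K V]
    [FiniteDimensional K V] (x : ι → κ → V) (m : ℕ) :
    ∀ (S : ι → Finset κ), ∑ i, (S i).card ≤ m →
    (∀ A : Finset ι, A.card ≤
      Module.finrank K (⨆ i ∈ A, Submodule.span K (x i '' (S i : Set κ)) : Submodule K V)) →
    ∃ f : ι → κ, (∀ i, f i ∈ S i) ∧ LinearIndependent K (fun i => x i (f i)) := by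
  classical
  induction m with
  | zero =>
    intro S hS hA
    have h0 : ∀ i, S i = ∅ := by
      intro i
      have : ∑ i, (S i).card = 0 := by omega
      simpa using (Finset.sum_eq_zero_iff.1 this) i (Finset.mem_univ i)
    have : IsEmpty ι := by
      constructor
      intro i
      have := hA {i}
      simp [h0] at this
    exact ⟨fun i => isEmptyElim i, fun i => isEmptyElim i, linearIndependent_empty_type⟩
  | succ m ih =>
    intro S hS hA
    by_cases hall : ∀ i, (S i).card ≤ 1
    · have hone : ∀ i, ∃ c, S i = {c} := by
        intro i
        rw [← Finset.card_eq_one]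
        have h1 := hA {i}
        have : (S i).card ≠ 0 := by
          intro h
          rw [Finset.card_eq_zero] at h
          simp [h] at h1
        have := hall i
        omega
      choose f hf using hone
      refine ⟨f, fun i => by simp [hf], ?_⟩
      rw [linearIndependent_iff_card_le_finrank_span]
      have h1 := hA Finset.univ
      rw [Set.finrank]
      have e : (⨆ i ∈ (Finset.univ : Finset ι), Submodule.span K (x i '' (S i : Set κ))) =
          Submodule.span K (Set.range fun i => x i (f i)) := ?_
      · rw [e] at h1
        exact h1
      simp only [hf, Finset.mem_univ, iSup_pos, Finset.coe_singleton, Set.image_singleton]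
      rw [← Submodule.span_iUnion]
      congr 1
      ext y
      simp [eq_comm]
    · push Not at hall
      obtain ⟨i, hi⟩ := hall
      obtain ⟨c, hc, d, hd, hcd⟩ := Finset.one_lt_card.1 hi
      have key : ∀ e ∈ S i, ∑ j, ((Function.update S i ((S i).erase e)) j).card ≤ m := by
        intro e he
        have : ∑ j, ((Function.update S i ((S i).erase e)) j).card < ∑ j, (S j).card := by
          refine Finset.sum_lt_sum ?_ ⟨i, Finset.mem_univ i, ?_⟩
          · intro j _
            by_cases h : j = i
            · subst h
              simp [Finset.card_le_card (Finset.erase_subset _ _)]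
            · simp [h]
          · simpa using Finset.card_lt_card (Finset.erase_ssubset he)
        omega
      have sub : ∀ e j, (Function.update S i ((S i).erase e)) j ⊆ S j := by
        intro e j
        by_cases h : j = i
        · subst h
          simp [Finset.erase_subset]
        · simp [h]
      by_contra hno
      have key2 : ∀ e ∈ S i, ∃ A : Finset ι, i ∈ A ∧ Module.finrank K (⨆ j ∈ A, Submodule.span K
          (x j '' ((Function.update S i ((S i).erase e)) j : Set κ)) : Submodule K V) < A.card := by
        intro e he
        by_contra! hcon
        apply hno
        obtain ⟨f, hf, hf'⟩ := ih _ (key e he) (by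
          intro A
          by_cases hiA : i ∈ A
          · exact hcon A hiA
          · have : (⨆ j ∈ A, Submodule.span K (x j '' (S j : Set κ))) = ⨆ j ∈ A, Submodule.span K
                (x j '' ((Function.update S i ((S i).erase e)) j : Set κ)) := by
              refine iSup_congr fun j => iSup_congr fun hj => ?_
              have : j ≠ i := fun h => hiA (h ▸ hj)
              simp [this]
            rw [← this]
            exact hA A)
        exact ⟨f, fun j => sub e j (hf j), hf'⟩
      obtain ⟨A, hiA, hAc⟩ := key2 c hc
      obtain ⟨B, hiB, hBc⟩ := key2 d hd
      set U := (⨆ j ∈ A, Submodule.span K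
          (x j '' ((Function.update S i ((S i).erase c)) j : Set κ)) : Submodule K V) with hU
      set W := (⨆ j ∈ B, Submodule.span K
          (x j '' ((Function.update S i ((S i).erase d)) j : Set κ)) : Submodule K V) with hW
      have hUm : ∀ j ∈ A, ∀ e ∈ S j, (j = i → e ≠ c) → x j e ∈ U := by
        intro j hj e he hne
        refine Submodule.mem_iSup_of_mem j (Submodule.mem_iSup_of_mem hj
          (Submodule.subset_span ⟨e, ?_, rfl⟩))
        by_cases h : j = i
        · subst h; simp [hne rfl, he]
        · simp [h, he]
      have hWm : ∀ j ∈ B, ∀ e ∈ S j, (j = i → e ≠ d) → x j e ∈ W := by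
        intro j hj e he hne
        refine Submodule.mem_iSup_of_mem j (Submodule.mem_iSup_of_mem hj
          (Submodule.subset_span ⟨e, ?_, rfl⟩))
        by_cases h : j = i
        · subst h; simp [hne rfl, he]
        · simp [h, he]
      have h1 : (⨆ j ∈ A ∪ B, Submodule.span K (x j '' (S j : Set κ))) ≤ U ⊔ W := by
        refine iSup₂_le fun j hj => Submodule.span_le.2 ?_
        rintro _ ⟨e, he, rfl⟩
        by_cases h : j = i
        · subst h
          by_cases hec : e = c
          · exact Submodule.mem_sup_right (hWm j hiB e he (fun _ => by rw [hec]; exact hcd))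
          · exact Submodule.mem_sup_left (hUm j hiA e he (fun _ => hec))
        · rcases Finset.mem_union.1 hj with hj | hj
          · exact Submodule.mem_sup_left (hUm j hj e he (fun hh => absurd hh h))
          · exact Submodule.mem_sup_right (hWm j hj e he (fun hh => absurd hh h))
      have h2 : (⨆ j ∈ (A ∩ B).erase i, Submodule.span K (x j '' (S j : Set κ))) ≤ U ⊓ W := by
        refine iSup₂_le fun j hj => Submodule.span_le.2 ?_
        rintro _ ⟨e, he, rfl⟩
        simp only [Finset.mem_erase, Finset.mem_inter] at hj
        exact ⟨hUm j hj.2.1 e he (fun hh => absurd hh hj.1),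
          hWm j hj.2.2 e he (fun hh => absurd hh hj.1)⟩
      have h3 := (hA (A ∪ B)).trans (Submodule.finrank_mono h1)
      have h4 := (hA ((A ∩ B).erase i)).trans (Submodule.finrank_mono h2)
      have h5 := Submodule.finrank_sup_add_finrank_inf_eq U W
      have h6 := Finset.card_union_add_card_inter A B
      rw [Finset.card_erase_of_mem (Finset.mem_inter.2 ⟨hiA, hiB⟩)] at h4
      omega

/-- Partition of a family of vectors into `k` independent families. -/
lemma exists_partition {ι V : Type} [Fintype ι] [AddCommGroup V] [Module K V]
    [FiniteDimensional K V] (w : ι → V) (k : ℕ)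
    (h : ∀ A : Finset ι, A.card ≤ k * Module.finrank K (Submodule.span K (w '' (A : Set ι)))) :
    ∃ f : ι → Fin k, ∀ c, LinearIndepOn K w {i | f i = c} := by
  classical
  obtain ⟨f, -, hf⟩ := rado_aux (K := K) (fun (i : ι) (c : Fin k) => (Pi.single c (w i) : Fin k → V))
    _ (fun _ => Finset.univ) le_rfl (by
      intro A
      refine (h A).trans ?_
      set U := Submodule.span K (w '' (A : Set ι)) with hU
      set Y := (⨆ i ∈ A, Submodule.span K ((fun c : Fin k => (Pi.single c (w i) : Fin k → V)) ''
        ((Finset.univ : Finset (Fin k)) : Set (Fin k)))) with hY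
      have h1 : ∀ c, U ≤ Y.comap (LinearMap.single K (fun _ : Fin k => V) c) := by
        intro c
        rw [hU, Submodule.span_le]
        rintro _ ⟨i, hi, rfl⟩
        exact Submodule.mem_iSup_of_mem i (Submodule.mem_iSup_of_mem hi
          (Submodule.subset_span ⟨c, by simp, rfl⟩))
      let g : (Fin k → U) →ₗ[K] Y := LinearMap.codRestrict Y
        (LinearMap.pi fun c => U.subtype ∘ₗ LinearMap.proj c) (by
          intro y
          have : (LinearMap.pi fun c => U.subtype ∘ₗ LinearMap.proj c : (Fin k → U) →ₗ[K] _) y =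
              ∑ c, Pi.single c (y c : V) := by
            rw [Finset.univ_sum_single]
            rfl
          rw [this]
          exact Submodule.sum_mem _ fun c _ => h1 c (y c).2)
      have hg : Function.Injective g := by
        intro y z hyz
        ext c
        exact congrFun (congrArg Subtype.val hyz) c
      have := LinearMap.finrank_le_finrank_of_injective hg
      simpa [Module.finrank_pi_fintype] using this)
  refine ⟨f, fun c => ?_⟩
  have h1 : LinearIndependent K (fun i : {i | f i = c} => (Pi.single (f i.1) (w i.1) : Fin k → V)) :=
    hf.comp _ Subtype.val_injective
  have h2 : (fun i : {i | f i = c} => (Pi.single (f i.1) (w i.1) : Fin k → V)) =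
      (LinearMap.single K (fun _ : Fin k => V) c) ∘ (fun i : {i | f i = c} => w i.1) := by
    funext i
    have : f i.1 = c := i.2
    simp [this]
  rw [h2] at h1
  exact h1.of_comp

end PartTwo
section PartThree
variable {K : Type} [Field K]

/-- linear form -/
def linForm {N : ℕ} (g : (Fin N → K) →ₗ[K] K) : MvPolynomial (Fin N) K :=
  ∑ k, C (g (Pi.single k 1)) * X k

lemma linForm_hom {N : ℕ} (g : (Fin N → K) →ₗ[K] K) : (linForm g).IsHomogeneous 1 :=
  IsHomogeneous.sum _ _ _ fun k _ => isHomogeneous_C_mul_X _ _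

lemma dual_apply {N : ℕ} (g : (Fin N → K) →ₗ[K] K) (v : Fin N → K) :
    g v = ∑ k, g (Pi.single k 1) * v k := by
  conv_lhs => rw [← Finset.univ_sum_single v]
  rw [map_sum]
  refine Finset.sum_congr rfl fun k _ => ?_
  have : (Pi.single k (v k) : Fin N → K) = v k • Pi.single k 1 := by
    rw [← Pi.single_smul]; simp
  rw [this, map_smul, smul_eq_mul, mul_comm]

lemma eval_linForm {N : ℕ} (g : (Fin N → K) →ₗ[K] K) (v : Fin N → K) :
    eval v (linForm g) = g v := by
  rw [dual_apply g v]
  simp [linForm]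

lemma pderiv_linForm {N : ℕ} (g : (Fin N → K) →ₗ[K] K) (k : Fin N) :
    pderiv k (linForm g) = C (g (Pi.single k 1)) := by
  classical
  simp [linForm, pderiv_X, Pi.single_apply]

/-- jets of a product of forms, two of which vanish -/
lemma jet_prod_zero {N T : ℕ} (g : Fin T → (Fin N → K) →ₗ[K] K) (v : Fin N → K) (a b : Fin T)
    (hab : a ≠ b) (ha : g a v = 0) (hb : g b v = 0) :
    eval v (∏ c, linForm (g c)) = 0 ∧ ∀ k, eval v (pderiv k (∏ c, linForm (g c))) = 0 := by
  classical
  rw [← Finset.mul_prod_erase Finset.univ _ (Finset.mem_univ a),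
    ← Finset.mul_prod_erase (Finset.univ.erase a) _ (Finset.mem_erase.2 ⟨hab.symm, Finset.mem_univ b⟩)]
  simp [pderiv_mul, eval_linForm, ha, hb]

lemma jet_prod_one {N T : ℕ} (g : Fin T → (Fin N → K) →ₗ[K] K) (P v : Fin N → K) (a : Fin T)
    (ha : g a P = 0) :
    eval P (∏ c, linForm (g c)) = 0 ∧ ∑ k, v k * eval P (pderiv k (∏ c, linForm (g c))) =
      g a v * ∏ c ∈ Finset.univ.erase a, g c P := by
  classical
  rw [← Finset.mul_prod_erase Finset.univ _ (Finset.mem_univ a)]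
  refine ⟨by simp [eval_linForm, ha], ?_⟩
  rw [dual_apply (g a) v, Finset.sum_mul]
  refine Finset.sum_congr rfl fun k _ => ?_
  simp [pderiv_mul, eval_linForm, ha, pderiv_linForm, map_prod]
  ring

/-- the Segre condition -/
def SegreCond {n s : ℕ} (p : Fin s → Fin (n + 1) → K) (T : ℕ) : Prop :=
  ∀ (Q : Finset (Fin s)) (j : ℕ), 1 ≤ j → j ≤ n → Q.Nonempty → OnLinearSubspace p Q j →
    2 * Q.card ≤ T * j + 1

lemma exists_colouring {n s : ℕ} {p : Fin s → Fin (n + 1) → K} (hp : ProjDistinct p) {T : ℕ}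
    (hT : SegreCond p T) (i : Fin s) (v : Fin (n + 1) → K)
    (hv : v ∉ Submodule.span K {p i}) :
    ∃ f : Option ({j // j ≠ i} × Bool) → Fin T, ∀ c, LinearIndepOn K
      (fun o : Option ({j // j ≠ i} × Bool) => (Submodule.span K {p i}).mkQ
        (o.elim v (fun x => p x.1.1))) {o | f o = c} := by
  classical
  apply exists_partition
  intro A
  set w := (fun o : Option ({j // j ≠ i} × Bool) => (Submodule.span K {p i}).mkQ
        (o.elim v (fun x => p x.1.1))) with hw
  set U := Submodule.span K (w '' (A : Set _)) with hU
  rcases A.eq_empty_or_nonempty with hA | ⟨a, haA⟩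
  · simp [hA]
  have hw0 : ∀ o, w o ≠ 0 := by
    intro o
    rw [hw]
    simp only [Submodule.mkQ_apply, ne_eq, Submodule.Quotient.mk_eq_zero]
    rcases o with _ | ⟨⟨j, hj⟩, b⟩
    · exact hv
    · simp only [Option.elim]
      rw [Submodule.mem_span_singleton]
      rintro ⟨c, hc⟩
      exact hp.2 j i hj c hc.symm
  have hmem : ∀ o ∈ A, w o ∈ U := fun o ho => Submodule.subset_span ⟨o, ho, rfl⟩
  have hr1 : 1 ≤ Module.finrank K U := by
    refine Nat.one_le_iff_ne_zero.2 fun h => ?_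
    rw [Submodule.finrank_eq_zero] at h
    have := hmem a haA
    rw [h] at this
    exact hw0 a (by simpa using this)
  have hrn : Module.finrank K U ≤ n := by
    have h1 := Submodule.finrank_le U
    have h2 := Submodule.finrank_quotient_add_finrank (Submodule.span K {p i})
    rw [finrank_span_singleton (hp.1 i)] at h2
    simp at h2
    omega
  obtain ⟨σ, hσ⟩ := LinearMap.exists_rightInverse_of_surjective (Submodule.span K {p i}).mkQ
    (Submodule.range_mkQ _)
  set W := Submodule.span K {p i} ⊔ U.map σ with hW
  have hWd : Module.finrank K W ≤ Module.finrank K U + 1 := by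
    have h1 := Submodule.finrank_add_le_finrank_add_finrank (Submodule.span K {p i}) (U.map σ)
    have h2 := Submodule.finrank_map_le σ U
    rw [finrank_span_singleton (hp.1 i), ← hW] at h1
    omega
  have hWm : ∀ x, (Submodule.span K {p i}).mkQ x ∈ U → x ∈ W := by
    intro x hx
    have h1 : x - σ ((Submodule.span K {p i}).mkQ x) ∈ Submodule.span K {p i} := by
      rw [← Submodule.Quotient.mk_eq_zero, ← Submodule.mkQ_apply, map_sub, sub_eq_zero]
      exact (LinearMap.congr_fun hσ ((Submodule.span K {p i}).mkQ x)).symm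
    have h2 := Submodule.add_mem_sup h1 (Submodule.mem_map_of_mem (f := σ) hx)
    simpa using h2
  set Q' : Finset {j // j ≠ i} := Finset.univ.filter fun j => p j.1 ∈ W with hQ'
  have hQs := hT (insert i (Q'.map (Function.Embedding.subtype _))) (Module.finrank K U) hr1 hrn
    (Finset.insert_nonempty _ _) ⟨W, hWd, by
      intro j hj
      simp only [Finset.mem_insert, Finset.mem_map, Function.Embedding.coe_subtype] at hj
      rcases hj with rfl | ⟨x, hx, rfl⟩
      · exact Submodule.mem_sup_left (Submodule.mem_span_singleton_self _)
      · exact (Finset.mem_filter.1 hx).2⟩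
  rw [Finset.card_insert_of_notMem (by simp), Finset.card_map] at hQs
  have hsub : A ⊆ Finset.insertNone (Q' ×ˢ (Finset.univ : Finset Bool)) := by
    intro o ho
    rcases o with _ | ⟨j, b⟩
    · simp
    · simp only [Finset.some_mem_insertNone, Finset.mem_product, Finset.mem_univ, and_true]
      exact Finset.mem_filter.2 ⟨Finset.mem_univ _, hWm _ (hmem _ ho)⟩
  have := Finset.card_le_card hsub
  rw [Finset.card_insertNone, Finset.card_product] at this
  simp at this
  omega

lemma notMem_span_of_indep {ι V W : Type} [AddCommGroup V] [Module K V] [AddCommGroup W]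
    [Module K W] (π : V →ₗ[K] W) (u : ι → V) (S : Set ι)
    (h : LinearIndepOn K (fun i => π (u i)) S) (P : V) (hP : P ≠ 0) (hπ : π P = 0) :
    P ∉ Submodule.span K (u '' S) := by
  intro hmem
  rw [Finsupp.mem_span_image_iff_linearCombination] at hmem
  obtain ⟨l, hl, rfl⟩ := hmem
  rw [Finsupp.apply_linearCombination] at hπ
  have := (linearIndepOn_iff.1 h) l hl hπ
  rw [this] at hP
  simp at hP

lemma exists_dual_sep {V : Type} [AddCommGroup V] [Module K V] (U : Submodule K V) (x : V)
    (hx : x ∉ U) : ∃ g : V →ₗ[K] K, g x ≠ 0 ∧ ∀ y ∈ U, g y = 0 := by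
  obtain ⟨g, h1, h2⟩ := Submodule.exists_le_ker_of_notMem hx
  exact ⟨g, h1, fun y hy => h2 hy⟩

lemma exists_forms {n s : ℕ} {p : Fin s → Fin (n + 1) → K} (hp : ProjDistinct p) {T : ℕ}
    (hT : SegreCond p T) (i : Fin s) (v : Fin (n + 1) → K)
    (hv : v ∉ Submodule.span K {p i}) :
    (∃ F : MvPolynomial (Fin (n + 1)) K, F.IsHomogeneous T ∧ eval (p i) F ≠ 0 ∧
      ∀ j ≠ i, eval (p j) F = 0 ∧ ∀ k, eval (p j) (pderiv k F) = 0) ∧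
    (∃ F : MvPolynomial (Fin (n + 1)) K, F.IsHomogeneous T ∧ eval (p i) F = 0 ∧
      ∑ k, v k * eval (p i) (pderiv k F) ≠ 0 ∧
      ∀ j ≠ i, eval (p j) F = 0 ∧ ∀ k, eval (p j) (pderiv k F) = 0) := by
  classical
  obtain ⟨f, hf⟩ := exists_colouring hp hT i v hv
  set π := (Submodule.span K {p i}).mkQ with hπ
  set u : Option ({j // j ≠ i} × Bool) → (Fin (n + 1) → K) :=
    fun o => o.elim v (fun x => p x.1.1) with hu
  have hπP : π (p i) = 0 := by
    rw [hπ, Submodule.mkQ_apply, Submodule.Quotient.mk_eq_zero]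
    exact Submodule.mem_span_singleton_self _
  have hg : ∀ c, ∃ g : (Fin (n + 1) → K) →ₗ[K] K, g (p i) ≠ 0 ∧
      ∀ o, f o = c → g (u o) = 0 := by
    intro c
    obtain ⟨g, h1, h2⟩ := exists_dual_sep _ _
      (notMem_span_of_indep π u {o | f o = c} (hf c) (p i) (hp.1 i) hπP)
    exact ⟨g, h1, fun o ho => h2 _ (Submodule.subset_span ⟨o, ho, rfl⟩)⟩
  choose g hg1 hg2 using hg
  have hcol : ∀ j (hj : j ≠ i), f (some (⟨j, hj⟩, false)) ≠ f (some (⟨j, hj⟩, true)) := by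
    intro j hj h
    have := (hf (f (some (⟨j, hj⟩, true)))).injOn (x₁ := some (⟨j, hj⟩, false))
      (x₂ := some (⟨j, hj⟩, true)) h rfl rfl
    simp at this
  have hdeg : ∀ g : Fin T → (Fin (n + 1) → K) →ₗ[K] K,
      (∏ c, linForm (g c)).IsHomogeneous T := by
    intro g
    have := IsHomogeneous.prod Finset.univ (fun c => linForm (g c)) (fun _ => 1)
      (fun c _ => linForm_hom _)
    simpa using this
  constructor
  · refine ⟨∏ c, linForm (g c), hdeg g, ?_, ?_⟩
    · rw [map_prod]
      refine Finset.prod_ne_zero_iff.2 fun c _ => ?_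
      rw [eval_linForm]
      exact hg1 c
    · intro j hj
      exact jet_prod_zero g (p j) _ _ (hcol j hj) (hg2 _ _ rfl) (hg2 _ (some (⟨j, hj⟩, true)) rfl)
  · obtain ⟨h, hh1, hh2⟩ := exists_dual_sep
      (Submodule.span K ((fun o => π (u o)) '' ({o | f o = f none} \ {none}))) (π v) (by
        exact (hf (f none)).notMem_span (i := none) rfl)
    set g' : Fin T → (Fin (n + 1) → K) →ₗ[K] K :=
      Function.update g (f none) (h ∘ₗ π) with hg'
    have hgo : ∀ x, g' (f (some x)) (u (some x)) = 0 := by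
      intro x
      by_cases hx : f (some x) = f none
      · rw [hx, hg', Function.update_self]
        exact hh2 _ (Submodule.subset_span ⟨some x, ⟨hx, by simp⟩, rfl⟩)
      · rw [hg', Function.update_of_ne hx]
        exact hg2 _ _ rfl
    have hj1 := jet_prod_one g' (p i) v (f none) (by simp [hg', hπP])
    refine ⟨∏ c, linForm (g' c), hdeg g', hj1.1, ?_, ?_⟩
    · rw [hj1.2]
      refine mul_ne_zero ?_ (Finset.prod_ne_zero_iff.2 fun c hc => ?_)
      · simpa [hg'] using hh1
      · rw [hg', Function.update_of_ne (Finset.mem_erase.1 hc).1]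
        exact hg1 c
    · intro j hj
      exact jet_prod_zero g' (p j) _ _ (hcol j hj) (hgo _) (hgo (⟨j, hj⟩, true))

lemma jetSurj_of_segre {n s : ℕ} (hn : 1 ≤ n) {p : Fin s → Fin (n + 1) → K} (hp : ProjDistinct p)
    {T : ℕ} (hT : SegreCond p T) : JetSurj p T := by
  classical
  have main : ∀ i (c : K) (φ : Fin (n + 1) → K), ∑ k, p i k * φ k = T * c →
      ∃ F : MvPolynomial (Fin (n + 1)) K, F.IsHomogeneous T ∧
        (eval (p i) F = c ∧ ∀ k, eval (p i) (pderiv k F) = φ k) ∧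
        ∀ j ≠ i, eval (p j) F = 0 ∧ ∀ k, eval (p j) (pderiv k F) = 0 := by
    intro i
    let U : Submodule K (Fin (n + 1) → K) :=
      { carrier := {φ | ∃ F : MvPolynomial (Fin (n + 1)) K, F.IsHomogeneous T ∧
          (eval (p i) F = 0 ∧ ∀ k, eval (p i) (pderiv k F) = φ k) ∧
          ∀ j ≠ i, eval (p j) F = 0 ∧ ∀ k, eval (p j) (pderiv k F) = 0}
        add_mem' := by
          rintro a b ⟨F, h1, ⟨h2, h3⟩, h4⟩ ⟨G, g1, ⟨g2, g3⟩, g4⟩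
          refine ⟨F + G, h1.add g1, ⟨by simp [h2, g2], by simp [h3, g3]⟩, fun j hj => ?_⟩
          obtain ⟨h5, h6⟩ := h4 j hj
          obtain ⟨g5, g6⟩ := g4 j hj
          exact ⟨by simp [h5, g5], by simp [h6, g6]⟩
        zero_mem' := ⟨0, isHomogeneous_zero _ _ _, by simp, by simp⟩
        smul_mem' := by
          rintro c b ⟨F, h1, ⟨h2, h3⟩, h4⟩
          refine ⟨C c * F, h1.C_mul c, ⟨by simp [h2], by simp [h3]⟩, fun j hj => ?_⟩
          obtain ⟨h5, h6⟩ := h4 j hj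
          exact ⟨by simp [h5], by simp [h6]⟩ }
    have hU : ∀ φ : Fin (n + 1) → K, ∑ k, p i k * φ k = 0 → φ ∈ U := by
      intro φ hφ
      by_contra hcon
      obtain ⟨g, hg1, hg2⟩ := exists_dual_sep U φ hcon
      set v : Fin (n + 1) → K := fun k => g (Pi.single k 1) with hv
      have hvP : v ∉ Submodule.span K {p i} := by
        rw [Submodule.mem_span_singleton]
        rintro ⟨a, ha⟩
        apply hg1
        rw [dual_apply]
        have : ∀ k, g (Pi.single k 1) = a * p i k := fun k => (congrFun ha k).symm
        simp only [this, mul_assoc, ← Finset.mul_sum, hφ, mul_zero]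
      obtain ⟨-, F, h1, h2, h3, h4⟩ := exists_forms hp hT i v hvP
      apply h3
      have := hg2 (fun k => eval (p i) (pderiv k F)) ⟨F, h1, ⟨h2, fun _ => rfl⟩, h4⟩
      rw [dual_apply] at this
      exact this
    intro c φ hc
    obtain ⟨v, hv⟩ : ∃ v, v ∉ Submodule.span K {p i} := by
      by_contra! h
      have h1 : Submodule.span K {p i} = ⊤ := by
        ext x; simp [h x]
      have h2 := finrank_span_singleton (K := K) (hp.1 i)
      rw [h1, finrank_top] at h2
      simp at h2
      omega
    obtain ⟨⟨F, h1, h2, h3⟩, -⟩ := exists_forms hp hT i v hv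
    set a := c / eval (p i) F with ha
    have hE := congrArg (eval (p i)) (IsHomogeneous.sum_X_mul_pderiv h1)
    simp [map_sum] at hE
    have hac : a * eval (p i) F = c := div_mul_cancel₀ _ h2
    obtain ⟨G, g1, ⟨g2, g3⟩, g4⟩ := hU (fun k => φ k - a * eval (p i) (pderiv k F)) (by
      simp only [mul_sub, Finset.sum_sub_distrib, hc]
      have : ∀ k, p i k * (a * eval (p i) (pderiv k F)) = a * (p i k * eval (p i) (pderiv k F)) :=
        fun k => by ring
      simp only [this, ← Finset.mul_sum, hE]
      rw [← hac]; ring)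
    refine ⟨G + C a * F, g1.add (h1.C_mul a), ⟨by simp [g2, hac], by simp [g3]⟩, fun j hj => ?_⟩
    obtain ⟨h5, h6⟩ := h3 j hj
    obtain ⟨g5, g6⟩ := g4 j hj
    exact ⟨by simp [h5, g5], by simp [h6, g6]⟩
  intro c φ hc
  choose F hF1 hF2 hF3 using fun i => main i (c i) (φ i) (hc i)
  refine ⟨∑ i, F i, IsHomogeneous.sum _ _ _ fun i _ => hF1 i, fun i => ⟨?_, fun k => ?_⟩⟩
  · rw [map_sum, Finset.sum_eq_single i (fun j _ hj => (hF3 j i hj.symm).1) (by simp)]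
    exact (hF2 i).1
  · rw [map_sum, map_sum, Finset.sum_eq_single i (fun j _ hj => (hF3 j i hj.symm).2 k) (by simp)]
    exact (hF2 i).2 k

end PartThree
section PartFour
variable {K : Type} [Field K]

lemma eval_aeval_comp {N d : ℕ} (g : Fin N → MvPolynomial (Fin d) K) (u : Fin d → K)
    (F : MvPolynomial (Fin N) K) :
    eval u (aeval g F) = eval (fun k => eval u (g k)) F := by
  induction F using MvPolynomial.induction_on with
  | C c => simp
  | add f f' hf hf' => rw [map_add, map_add, map_add, hf, hf']
  | mul_X f k hf => rw [map_mul, map_mul, map_mul, hf, aeval_X, eval_X]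

lemma pderiv_aeval_chain {N d : ℕ} (g : Fin N → MvPolynomial (Fin d) K) (l : Fin d)
    (F : MvPolynomial (Fin N) K) :
    pderiv l (aeval g F) = ∑ k, aeval g (pderiv k F) * pderiv l (g k) := by
  classical
  induction F using MvPolynomial.induction_on with
  | C c => simp [algebraMap_eq]
  | add f f' hf hf' => simp only [map_add, hf, hf', add_mul, Finset.sum_add_distrib]
  | mul_X f k hf =>
    have : ∀ j, aeval g (pderiv j (f * X k)) * pderiv l (g j) =
        aeval g (pderiv j f) * pderiv l (g j) * g k +
          aeval g f * (if k = j then pderiv l (g j) else 0) := by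
      intro j
      rw [pderiv_mul, pderiv_X]
      by_cases h : k = j
      · subst h; simp; ring
      · simp [h]; ring
    simp only [this, Finset.sum_add_distrib, ← Finset.sum_mul, ← Finset.mul_sum, ← hf]
    rw [map_mul, aeval_X, pderiv_mul]
    simp

lemma jetSurj_restrict {ι ι' : Type} {N d t : ℕ} {p : ι → Fin N → K} (h : JetSurj p t)
    (L : (Fin d → K) →ₗ[K] (Fin N → K)) (hL : Function.Injective L) (e : ι' → ι)
    (he : Function.Injective e) (u : ι' → Fin d → K) (hu : ∀ i, L (u i) = p (e i)) :
    JetSurj u t := by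
  classical
  obtain ⟨M, hM⟩ := LinearMap.exists_leftInverse_of_injective L (LinearMap.ker_eq_bot.2 hL)
  intro c ψ hc
  let dl : (Fin d → K) → ((Fin d → K) →ₗ[K] K) := fun ψ =>
    ∑ l, ψ l • LinearMap.proj l
  have hdl : ∀ ψ v, dl ψ v = ∑ l, v l * ψ l := by
    intro ψ v
    simp [dl, mul_comm]
  have hdual : ∀ i, ∑ k, p (e i) k * dl (ψ i) (M (Pi.single k 1)) = t * c i := by
    intro i
    have h1 := dual_apply (dl (ψ i) ∘ₗ M) (p (e i))
    simp only [LinearMap.comp_apply] at h1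
    have h2 : M (p (e i)) = u i := by
      rw [← hu]
      exact LinearMap.congr_fun hM (u i)
    rw [h2, hdl, hc] at h1
    rw [h1]
    exact Finset.sum_congr rfl fun _ _ => mul_comm _ _
  obtain ⟨F, hF1, hF2⟩ := h (Function.extend e c 0)
    (Function.extend e (fun i k => dl (ψ i) (M (Pi.single k 1))) 0) (by
      intro i
      by_cases hi : ∃ i', e i' = i
      · obtain ⟨i', rfl⟩ := hi
        rw [he.extend_apply, he.extend_apply]
        exact hdual i'
      · rw [Function.extend_apply' _ _ _ hi, Function.extend_apply' _ _ _ hi]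
        simp)
  set g : Fin N → MvPolynomial (Fin d) K := fun k => linForm (LinearMap.proj k ∘ₗ L) with hg
  have hev : ∀ (i : ι') (G : MvPolynomial (Fin N) K),
      eval (u i) (aeval g G) = eval (p (e i)) G := by
    intro i G
    rw [eval_aeval_comp]
    congr 2
    funext k
    rw [hg, eval_linForm, ← hu]
    rfl
  refine ⟨aeval g F, ?_, fun i => ⟨?_, fun l => ?_⟩⟩
  · have := hF1.aeval g (fun k => linForm_hom _)
    simpa using this
  · rw [hev, (hF2 _).1, he.extend_apply]
  · rw [pderiv_aeval_chain, map_sum]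
    have : ∀ k, eval (u i) (aeval g (pderiv k F) * pderiv l (g k)) =
        dl (ψ i) (M (Pi.single k 1)) * L (Pi.single l 1) k := by
      intro k
      rw [map_mul, hev, (hF2 _).2, he.extend_apply, hg, pderiv_linForm]
      simp
    rw [Finset.sum_congr rfl fun k _ => this k]
    have h1 := dual_apply (dl (ψ i) ∘ₗ M) (L (Pi.single l 1))
    simp only [LinearMap.comp_apply] at h1
    rw [← h1]
    have h2 : M (L (Pi.single l 1)) = Pi.single l 1 := LinearMap.congr_fun hM _
    rw [h2, hdl]
    simp [Pi.single_apply]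

lemma exists_super {V : Type} [AddCommGroup V] [Module K V] [FiniteDimensional K V]
    (W : Submodule K V) (m : ℕ) (h1 : Module.finrank K W ≤ m) (h2 : m ≤ Module.finrank K V) :
    ∃ W' : Submodule K V, W ≤ W' ∧ Module.finrank K W' = m := by
  induction m, h1 using Nat.le_induction with
  | base => exact ⟨W, le_rfl, rfl⟩
  | succ m hm ih =>
    obtain ⟨W', hW, hd⟩ := ih (by omega)
    have : W' ≠ ⊤ := by
      rintro rfl
      rw [finrank_top] at hd
      omega
    obtain ⟨x, hx⟩ : ∃ x, x ∉ W' := by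
      by_contra! h
      exact this (by ext y; simp [h y])
    exact ⟨W' ⊔ Submodule.span K {x}, hW.trans le_sup_left, by
      rw [Submodule.finrank_sup_span_singleton hx, hd]⟩

lemma exists_restrict {ι ι' : Type} {n j t : ℕ} {p : ι → Fin (n + 1) → K}
    (hp : ∀ i, p i ≠ 0) (h : JetSurj p t) (hj : j ≤ n) (e : ι' → ι) (he : Function.Injective e)
    (W : Submodule K (Fin (n + 1) → K)) (hW : Module.finrank K W ≤ j + 1)
    (hm : ∀ i, p (e i) ∈ W) :
    ∃ u : ι' → Fin (j + 1) → K, (∀ i, u i ≠ 0) ∧ JetSurj u t := by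
  obtain ⟨W', hWW, hd⟩ := exists_super W (j + 1) hW (by simp; omega)
  let b := Module.finBasisOfFinrankEq K W' hd
  let L : (Fin (j + 1) → K) →ₗ[K] (Fin (n + 1) → K) :=
    W'.subtype ∘ₗ b.equivFun.symm.toLinearMap
  have hL : Function.Injective L :=
    (Submodule.injective_subtype W').comp b.equivFun.symm.injective
  have hu : ∀ i, L (b.equivFun ⟨p (e i), hWW (hm i)⟩) = p (e i) := by
    intro i
    simp [L]
  refine ⟨fun i => b.equivFun ⟨p (e i), hWW (hm i)⟩, ?_, jetSurj_restrict h L hL e he _ hu⟩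
  intro i h0
  apply hp (e i)
  have h0' : b.equivFun ⟨p (e i), hWW (hm i)⟩ = 0 := h0
  rw [← hu i, h0', map_zero]

lemma count_le {ι ι' : Type} [Fintype ι'] {n j t : ℕ} {p : ι → Fin (n + 1) → K}
    (hp : ∀ i, p i ≠ 0) (h : JetSurj p t) (hj : j ≤ n) (e : ι' → ι) (he : Function.Injective e)
    (W : Submodule K (Fin (n + 1) → K)) (hW : Module.finrank K W ≤ j + 1)
    (hm : ∀ i, p (e i) ∈ W) :
    Fintype.card ι' * (j + 1) ≤ (j + t).choose t := by
  obtain ⟨u, hu, hs⟩ := exists_restrict hp h hj e he W hW hm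
  have := jetSurj_card_le hu hs
  have e : j + 1 + t - 1 = j + t := by omega
  rwa [e] at this

/-- five coplanar double points fail in degree four -/
lemma five_coplanar {ι ι' : Type} [Fintype ι'] {n : ℕ} {p : ι → Fin (n + 1) → K}
    (hp : ∀ i, p i ≠ 0) (h : JetSurj p 4) (hj : 2 ≤ n) (e : ι' → ι) (he : Function.Injective e)
    (W : Submodule K (Fin (n + 1) → K)) (hW : Module.finrank K W ≤ 2 + 1)
    (hm : ∀ i, p (e i) ∈ W) : Fintype.card ι' < 5 := by
  obtain ⟨u, hu, hs⟩ := exists_restrict hp h hj e he W hW hm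
  have h1 := jetSurj_card_le hu hs
  have e1 : (2 + 1 + 4 - 1).choose 4 = 15 := by decide
  rw [e1] at h1
  let ev : homogeneousSubmodule (Fin 3) K 2 →ₗ[K] (ι' → K) :=
    { toFun := fun F i => eval (u i) F.1
      map_add' := fun F G => by ext; simp
      map_smul' := fun c F => by ext; simp [smul_eval] }
  have h2 : Module.finrank K (ι' → K) < Module.finrank K (homogeneousSubmodule (Fin 3) K 2) := by
    rw [finrank_hom]
    have e2 : (3 + 2 - 1).choose 2 = 6 := by decide
    rw [e2, Module.finrank_fintype_fun_eq_card]
    omega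
  have h3 := LinearMap.ker_ne_bot_of_finrank_lt (f := ev) h2
  obtain ⟨F, hF, hF0⟩ := Submodule.exists_mem_ne_zero_of_ne_bot h3
  have hz : ∀ i, eval (u i) F.1 = 0 := fun i => congrFun (LinearMap.mem_ker.1 hF) i
  have hF0' : F.1 ≠ 0 := fun h => hF0 (Subtype.ext h)
  have hh : (F.1 * F.1).IsHomogeneous 4 := IsHomogeneous.mul F.2 F.2
  have h4 := jetSurj_card_lt hu hs (F.1 * F.1) hh (mul_ne_zero hF0' hF0')
    (fun i => ⟨by simp [hz], fun k => by simp [pderiv_mul, hz]⟩)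
  rw [e1] at h4
  omega

end PartFour
section PartFive
variable {K : Type} [Field K]

/-- the `2 × 2` minors of a pair of vectors -/
def minorD (a b : Fin 5 → K) (i j : Fin 5) : K := a i * b j - a j * b i

/-- the five coordinate points and two further points -/
def sevenPts (a b : Fin 5 → K) : Fin 5 ⊕ Fin 2 → Fin 5 → K :=
  Sum.elim (fun k => Pi.single k 1) ![a, b]

/-- a general square-free cubic in five variables -/
def sqfCubic (c : Fin 10 → K) : MvPolynomial (Fin 5) K :=
   C (c 0) * (X 2 * X 3 * X 4) +
   C (c 1) * (X 1 * X 3 * X 4) +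
   C (c 2) * (X 1 * X 2 * X 4) +
   C (c 3) * (X 1 * X 2 * X 3) +
   C (c 4) * (X 0 * X 3 * X 4) +
   C (c 5) * (X 0 * X 2 * X 4) +
   C (c 6) * (X 0 * X 2 * X 3) +
   C (c 7) * (X 0 * X 1 * X 4) +
   C (c 8) * (X 0 * X 1 * X 3) +
   C (c 9) * (X 0 * X 1 * X 2)

lemma sqfCubic_hom (c : Fin 10 → K) : (sqfCubic c).IsHomogeneous 3 := by
  have h : ∀ (x : K) (i j k : Fin 5), (C x * (X i * X j * X k) :
      MvPolynomial (Fin 5) K).IsHomogeneous 3 := fun x i j k =>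
    (isHomogeneous_C _ x).mul
      (((isHomogeneous_X K i).mul (isHomogeneous_X K j)).mul (isHomogeneous_X K k))
  unfold sqfCubic
  repeat' apply IsHomogeneous.add
  all_goals apply h

lemma eval_sqfCubic (c : Fin 10 → K) (v : Fin 5 → K) :
    eval v (sqfCubic c) =
    c 0 * (v 2 * v 3 * v 4) + c 1 * (v 1 * v 3 * v 4) + c 2 * (v 1 * v 2 * v 4) +
    c 3 * (v 1 * v 2 * v 3) + c 4 * (v 0 * v 3 * v 4) + c 5 * (v 0 * v 2 * v 4) +
    c 6 * (v 0 * v 2 * v 3) + c 7 * (v 0 * v 1 * v 4) + c 8 * (v 0 * v 1 * v 3) +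
    c 9 * (v 0 * v 1 * v 2) := by
  simp [sqfCubic]

lemma eval_pderiv_sqfCubic (c : Fin 10 → K) (v : Fin 5 → K) (l : Fin 5) :
    eval v (pderiv l (sqfCubic c)) =
    ![c 4 * (v 3 * v 4) + c 5 * (v 2 * v 4) + c 6 * (v 2 * v 3) + c 7 * (v 1 * v 4) +
        c 8 * (v 1 * v 3) + c 9 * (v 1 * v 2),
      c 1 * (v 3 * v 4) + c 2 * (v 2 * v 4) + c 3 * (v 2 * v 3) + c 7 * (v 0 * v 4) +
        c 8 * (v 0 * v 3) + c 9 * (v 0 * v 2),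
      c 0 * (v 3 * v 4) + c 2 * (v 1 * v 4) + c 3 * (v 1 * v 3) + c 5 * (v 0 * v 4) +
        c 6 * (v 0 * v 3) + c 9 * (v 0 * v 1),
      c 0 * (v 2 * v 4) + c 1 * (v 1 * v 4) + c 3 * (v 1 * v 2) + c 4 * (v 0 * v 4) +
        c 6 * (v 0 * v 2) + c 8 * (v 0 * v 1),
      c 0 * (v 2 * v 3) + c 1 * (v 1 * v 3) + c 2 * (v 1 * v 2) + c 4 * (v 0 * v 3) +
        c 5 * (v 0 * v 2) + c 7 * (v 0 * v 1)] l := by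
  fin_cases l <;>
  · simp [sqfCubic, pderiv_mul, pderiv_X, Pi.single_apply]
    try ring

/-- coefficients of the cubic singular along the seven points -/
def cubCoef (a b : Fin 5 → K) : Fin 10 → K :=
  let D := minorD a b
  ![(-1) * D 2 3 * D 2 4 * D 3 4 * D 0 1 * (a 0 * a 1 * b 0 * b 1),
    (1) * D 1 3 * D 1 4 * D 3 4 * D 0 2 * (a 0 * a 2 * b 0 * b 2),
    (-1) * D 1 2 * D 1 4 * D 2 4 * D 0 3 * (a 0 * a 3 * b 0 * b 3),
    (1) * D 1 2 * D 1 3 * D 2 3 * D 0 4 * (a 0 * a 4 * b 0 * b 4),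
    (-1) * D 0 3 * D 0 4 * D 3 4 * D 1 2 * (a 1 * a 2 * b 1 * b 2),
    (1) * D 0 2 * D 0 4 * D 2 4 * D 1 3 * (a 1 * a 3 * b 1 * b 3),
    (-1) * D 0 2 * D 0 3 * D 2 3 * D 1 4 * (a 1 * a 4 * b 1 * b 4),
    (-1) * D 0 1 * D 0 4 * D 1 4 * D 2 3 * (a 2 * a 3 * b 2 * b 3),
    (1) * D 0 1 * D 0 3 * D 1 3 * D 2 4 * (a 2 * a 4 * b 2 * b 4),
    (-1) * D 0 1 * D 0 2 * D 1 2 * D 3 4 * (a 3 * a 4 * b 3 * b 4)]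

lemma cubic_jets_coord (c : Fin 10 → K) (k l : Fin 5) :
    eval (Pi.single k 1) (sqfCubic c) = 0 ∧
      eval (Pi.single k 1) (pderiv l (sqfCubic c)) = 0 := by
  constructor
  · rw [eval_sqfCubic]
    fin_cases k <;> simp [Pi.single_apply]
  · rw [eval_pderiv_sqfCubic]
    fin_cases k <;> fin_cases l <;> simp [Pi.single_apply]

lemma cubic_jets_a (a b : Fin 5 → K) (l : Fin 5) :
    eval a (sqfCubic (cubCoef a b)) = 0 ∧
      eval a (pderiv l (sqfCubic (cubCoef a b))) = 0 := by
  constructor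
  · rw [eval_sqfCubic]
    simp [cubCoef, minorD]
    ring
  · rw [eval_pderiv_sqfCubic]
    fin_cases l <;>
    · simp [cubCoef, minorD]
      ring

lemma cubic_jets_b (a b : Fin 5 → K) (l : Fin 5) :
    eval b (sqfCubic (cubCoef a b)) = 0 ∧
      eval b (pderiv l (sqfCubic (cubCoef a b))) = 0 := by
  constructor
  · rw [eval_sqfCubic]
    simp [cubCoef, minorD]
    ring
  · rw [eval_pderiv_sqfCubic]
    fin_cases l <;>
    · simp [cubCoef, minorD]
      ring

lemma sevenPts_ne {a b : Fin 5 → K} (ha : a ≠ 0) (hb : b ≠ 0) (i : Fin 5 ⊕ Fin 2) :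
    sevenPts a b i ≠ 0 := by
  rcases i with k | c
  · intro h
    have := congrFun h k
    simp [sevenPts] at this
  · fin_cases c
    · simpa [sevenPts] using ha
    · simpa [sevenPts] using hb

lemma seven_coef_zero {a b : Fin 5 → K} (ha : a ≠ 0) (hb : b ≠ 0)
    (h : JetSurj (sevenPts a b) 3) : cubCoef a b 0 = 0 := by
  by_contra hc
  have h0 : sqfCubic (cubCoef a b) ≠ 0 := by
    intro h0
    have := eval_sqfCubic (cubCoef a b) ![0, 0, 1, 1, 1]
    rw [h0] at this
    simp at this
    exact hc this.symm
  have := jetSurj_card_lt (sevenPts_ne ha hb) h _ (sqfCubic_hom (cubCoef a b)) h0 (by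
    intro i
    rcases i with k | c
    · exact ⟨(cubic_jets_coord _ k 0).1, fun l => (cubic_jets_coord _ k l).2⟩
    · fin_cases c
      · exact ⟨(cubic_jets_a a b 0).1, fun l => (cubic_jets_a a b l).2⟩
      · exact ⟨(cubic_jets_b a b 0).1, fun l => (cubic_jets_b a b l).2⟩)
  have e1 : (5 + 3 - 1).choose 3 = 35 := by decide
  rw [e1] at this
  simp at this

lemma sevenPts_perm {a b : Fin 5 → K} (h : JetSurj (sevenPts a b) 3) (σ : Equiv.Perm (Fin 5)) :
    JetSurj (sevenPts (a ∘ σ) (b ∘ σ)) 3 := by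
  refine jetSurj_restrict h (LinearMap.funLeft K K σ.symm)
    (LinearMap.funLeft_injective_of_surjective K K _ σ.symm.surjective)
    (Sum.map σ id) (Function.Injective.sumMap σ.injective Function.injective_id) _ ?_
  rintro (k | c)
  · funext x
    simp [sevenPts, LinearMap.funLeft_apply, Pi.single_apply, Equiv.symm_apply_eq]
  · fin_cases c <;>
    · funext x
      simp [sevenPts, LinearMap.funLeft_apply]

lemma exists_perm3 {i j k : Fin 5} (hij : i ≠ j) (hik : i ≠ k) (hjk : j ≠ k) :
    ∃ σ : Equiv.Perm (Fin 5), σ 0 = i ∧ σ 1 = j ∧ σ 2 = k := by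
  have hx : Function.Injective (![0, 1, 2] : Fin 3 → Fin 5) := by decide
  have hy : Function.Injective (![i, j, k] : Fin 3 → Fin 5) := by
    intro x y
    fin_cases x <;> fin_cases y <;> simp [hij, hik, hjk, hij.symm, hik.symm, hjk.symm]
  have := Equiv.Perm.isMultiplyPretransitive (Fin 5) 3
  obtain ⟨σ, hσ⟩ := MulAction.exists_smul_eq (Equiv.Perm (Fin 5))
    (⟨_, hx⟩ : Fin 3 ↪ Fin 5) (⟨_, hy⟩ : Fin 3 ↪ Fin 5)
  refine ⟨σ, ?_, ?_, ?_⟩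
  · simpa using DFunLike.congr_fun hσ 0
  · simpa using DFunLike.congr_fun hσ 1
  · simpa using DFunLike.congr_fun hσ 2

lemma exists_third (i j : Fin 5) (hij : i ≠ j) : ∃ k, i ≠ k ∧ j ≠ k := by
  revert i j; decide

lemma finrank_span3 (v : Fin 3 → Fin 5 → K) :
    Module.finrank K (Submodule.span K (Set.range v)) ≤ 2 + 1 := by
  exact (finrank_range_le_card (R := K) v).trans (by simp)

lemma seven_A {a b : Fin 5 → K} (ha : a ≠ 0) (hb : b ≠ 0)
    (h : JetSurj (sevenPts a b) 3) (h0 : a 0 = 0) (h1 : a 1 = 0) : False := by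
  have he : Function.Injective
      (![Sum.inl 2, Sum.inl 3, Sum.inl 4, Sum.inr 0] : Fin 4 → Fin 5 ⊕ Fin 2) := by decide
  have := count_le (sevenPts_ne ha hb) h (j := 2) (by norm_num) _ he
    (Submodule.span K (Set.range ![Pi.single 2 1, Pi.single 3 1, Pi.single 4 1]))
    (finrank_span3 _) (by
      have hm : ∀ x : Fin 3, (![Pi.single 2 1, Pi.single 3 1, Pi.single 4 1] :
          Fin 3 → Fin 5 → K) x ∈ Submodule.span K (Set.range
            (![Pi.single 2 1, Pi.single 3 1, Pi.single 4 1] : Fin 3 → Fin 5 → K)) :=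
        fun x => Submodule.subset_span ⟨x, rfl⟩
      intro i
      fin_cases i
      · exact hm 0
      · exact hm 1
      · exact hm 2
      · have hs := Submodule.add_mem _ (Submodule.add_mem _ (Submodule.smul_mem _ (a 2) (hm 0))
          (Submodule.smul_mem _ (a 3) (hm 1))) (Submodule.smul_mem _ (a 4) (hm 2))
        convert hs using 1
        funext x
        fin_cases x <;> simp [sevenPts, h0, h1])
  have e1 : (2 + 3).choose 3 = 10 := by decide
  rw [e1] at this
  simp at this

lemma seven_B {a b : Fin 5 → K} (ha : a ≠ 0) (hb : b ≠ 0)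
    (h : JetSurj (sevenPts a b) 3) (h0 : a 0 ≠ 0) (h1 : minorD a b 0 1 = 0)
    (h2 : minorD a b 0 2 = 0) : False := by
  have he : Function.Injective
      (![Sum.inl 3, Sum.inl 4, Sum.inr 0, Sum.inr 1] : Fin 4 → Fin 5 ⊕ Fin 2) := by decide
  have := count_le (sevenPts_ne ha hb) h (j := 2) (by norm_num) _ he
    (Submodule.span K (Set.range ![Pi.single 3 1, Pi.single 4 1, a]))
    (finrank_span3 _) (by
      have hm : ∀ x : Fin 3, (![Pi.single 3 1, Pi.single 4 1, a] :
          Fin 3 → Fin 5 → K) x ∈ Submodule.span K (Set.range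
            (![Pi.single 3 1, Pi.single 4 1, a] : Fin 3 → Fin 5 → K)) :=
        fun x => Submodule.subset_span ⟨x, rfl⟩
      intro i
      fin_cases i
      · exact hm 0
      · exact hm 1
      · exact hm 2
      · have hs := Submodule.add_mem _ (Submodule.add_mem _
          (Submodule.smul_mem _ (b 3 - b 0 / a 0 * a 3) (hm 0))
          (Submodule.smul_mem _ (b 4 - b 0 / a 0 * a 4) (hm 1)))
          (Submodule.smul_mem _ (b 0 / a 0) (hm 2))
        unfold minorD at h1 h2
        convert hs using 1
        funext x
        fin_cases x <;> simp [sevenPts] <;> field_simp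
        · linear_combination h1
        · linear_combination h2)
  have e1 : (2 + 3).choose 3 = 10 := by decide
  rw [e1] at this
  simp at this

lemma seven_C {a b : Fin 5 → K} (ha : a ≠ 0) (hb : b ≠ 0)
    (h : JetSurj (sevenPts a b) 3) (h0 : a 0 = 0) (h1 : b 0 = 0) : False := by
  have he : Function.Injective
      (![Sum.inl 1, Sum.inl 2, Sum.inl 3, Sum.inl 4, Sum.inr 0, Sum.inr 1] :
        Fin 6 → Fin 5 ⊕ Fin 2) := by decide
  have := count_le (sevenPts_ne ha hb) h (j := 3) (by norm_num) _ he
    (Submodule.span K (Set.range ![Pi.single 1 1, Pi.single 2 1, Pi.single 3 1, Pi.single 4 1]))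
    ((finrank_range_le_card (R := K) _).trans (by simp)) (by
      have hm : ∀ x : Fin 4, (![Pi.single 1 1, Pi.single 2 1, Pi.single 3 1, Pi.single 4 1] :
          Fin 4 → Fin 5 → K) x ∈ Submodule.span K (Set.range
            (![Pi.single 1 1, Pi.single 2 1, Pi.single 3 1, Pi.single 4 1] :
              Fin 4 → Fin 5 → K)) :=
        fun x => Submodule.subset_span ⟨x, rfl⟩
      have hc : ∀ c : Fin 5 → K, c 0 = 0 → c ∈ Submodule.span K (Set.range
            (![Pi.single 1 1, Pi.single 2 1, Pi.single 3 1, Pi.single 4 1] :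
              Fin 4 → Fin 5 → K)) := by
        intro c hc
        have hs := Submodule.add_mem _ (Submodule.add_mem _ (Submodule.add_mem _
          (Submodule.smul_mem _ (c 1) (hm 0))
          (Submodule.smul_mem _ (c 2) (hm 1))) (Submodule.smul_mem _ (c 3) (hm 2)))
          (Submodule.smul_mem _ (c 4) (hm 3))
        convert hs using 1
        funext x
        fin_cases x <;> simp [hc]
      intro i
      fin_cases i
      · exact hm 0
      · exact hm 1
      · exact hm 2
      · exact hm 3
      · exact hc _ h0
      · exact hc _ h1)
  have e1 : (3 + 3).choose 3 = 20 := by decide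
  rw [e1] at this
  simp at this

lemma comp_perm_ne {a : Fin 5 → K} (ha : a ≠ 0) (σ : Equiv.Perm (Fin 5)) : a ∘ σ ≠ 0 := by
  intro h
  apply ha
  funext x
  simpa using congrFun h (σ.symm x)

lemma sevenPts_swap {a b : Fin 5 → K} (h : JetSurj (sevenPts a b) 3) :
    JetSurj (sevenPts b a) 3 := by
  refine jetSurj_restrict h LinearMap.id Function.injective_id
    (Sum.map id (Equiv.swap 0 1)) (Function.Injective.sumMap Function.injective_id
      (Equiv.injective _)) _ ?_
  rintro (k | c)
  · rfl
  · fin_cases c <;> simp [sevenPts]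

/-- pure combinatorics: a good pair of indices exists -/
lemma exists_good_pair (a b : Fin 5 → K)
    (hA : ∀ i j, i ≠ j → a i = 0 → a j = 0 → False)
    (hB : ∀ i j, i ≠ j → b i = 0 → b j = 0 → False)
    (hE : ∀ i j k, i ≠ j → i ≠ k → j ≠ k → minorD a b i j = 0 → minorD a b i k = 0 → False)
    (hV : ∀ i j, i ≠ j → minorD a b i j = 0 → a i ≠ 0 ∧ b i ≠ 0) :
    ∃ l m, l ≠ m ∧ a l ≠ 0 ∧ b l ≠ 0 ∧ a m ≠ 0 ∧ b m ≠ 0 ∧ minorD a b l m ≠ 0 ∧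
      ∀ i j, i ≠ j → i ≠ l → i ≠ m → j ≠ l → j ≠ m → minorD a b i j ≠ 0 := by
  have hsymm : ∀ i j, minorD a b i j = 0 → minorD a b j i = 0 := by
    intro i j h
    unfold minorD at h ⊢
    linear_combination -h
  have hG : ∀ x y, x ≠ y → ∃ m, m ≠ x ∧ m ≠ y ∧ a m ≠ 0 ∧ b m ≠ 0 := by
    intro x y hxy
    by_contra! hcon
    obtain ⟨z, hxz, hyz⟩ := exists_third x y hxy
    obtain ⟨σ, rfl, rfl, rfl⟩ := exists_perm3 hxy hxz hyz
    have n : ∀ i j : Fin 5, i ≠ j → σ i ≠ σ j := fun i j h => σ.injective.ne h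
    have h2 := hcon (σ 2) (n _ _ (by decide)) (n _ _ (by decide))
    have h3 := hcon (σ 3) (n _ _ (by decide)) (n _ _ (by decide))
    have h4 := hcon (σ 4) (n _ _ (by decide)) (n _ _ (by decide))
    have a23 := hA (σ 2) (σ 3) (n _ _ (by decide))
    have a24 := hA (σ 2) (σ 4) (n _ _ (by decide))
    have a34 := hA (σ 3) (σ 4) (n _ _ (by decide))
    have b23 := hB (σ 2) (σ 3) (n _ _ (by decide))
    have b24 := hB (σ 2) (σ 4) (n _ _ (by decide))
    have b34 := hB (σ 3) (σ 4) (n _ _ (by decide))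
    tauto
  by_cases hedge : ∃ x y, x ≠ y ∧ minorD a b x y = 0
  · obtain ⟨x, y, hxy, hD⟩ := hedge
    have gx := hV x y hxy hD
    by_cases hother : ∃ r s, r ≠ s ∧ r ≠ x ∧ r ≠ y ∧ s ≠ x ∧ s ≠ y ∧ minorD a b r s = 0
    · obtain ⟨r, s, hrs, hrx, hry, hsx, hsy, hD'⟩ := hother
      have gr := hV r s hrs hD'
      refine ⟨x, r, hrx.symm, gx.1, gx.2, gr.1, gr.2, fun h => hE x y r hxy hrx.symm hry.symm hD h,
        ?_⟩
      intro i j hij hix hir hjx hjr h0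
      have key : ∀ i j, i ≠ j → i ≠ x → j ≠ x → i ≠ r → j ≠ r → minorD a b i j = 0 →
          i ≠ y ∧ i ≠ s := by
        intro i j hij hix hjx hir hjr h0
        constructor
        · rintro rfl
          exact hE i j x hij hix hjx h0 (hsymm _ _ hD)
        · rintro rfl
          exact hE i j r hij hir hjr h0 (hsymm _ _ hD')
      have k1 := key i j hij hix hjx hir hjr h0
      have k2 := key j i hij.symm hjx hix hjr hir (hsymm _ _ h0)
      omega
    · push Not at hother
      obtain ⟨m, hmx, hmy, gm1, gm2⟩ := hG x y hxy
      refine ⟨x, m, hmx.symm, gx.1, gx.2, gm1, gm2,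
        fun h => hE x y m hxy hmx.symm hmy.symm hD h, ?_⟩
      intro i j hij hix him hjx hjm h0
      have hiy : i ≠ y := by
        rintro rfl
        exact hE i j x hij hix hjx h0 (hsymm _ _ hD)
      have hjy : j ≠ y := by
        rintro rfl
        exact hE j i x hij.symm hjx hix (hsymm _ _ h0) (hsymm _ _ hD)
      exact hother i j hij hix hiy hjx hjy h0
  · push Not at hedge
    obtain ⟨l, -, -, gl1, gl2⟩ := hG 0 1 (by decide)
    obtain ⟨z, hz⟩ : ∃ z, l ≠ z := exists_ne l |>.imp fun _ h => h.symm
    obtain ⟨m, hml, -, gm1, gm2⟩ := hG l z hz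
    exact ⟨l, m, hml.symm, gl1, gl2, gm1, gm2, hedge _ _ hml.symm,
      fun i j hij _ _ _ _ => hedge i j hij⟩

lemma not_jetSurj_sevenPts {a b : Fin 5 → K} (ha : a ≠ 0) (hb : b ≠ 0)
    (h : JetSurj (sevenPts a b) 3) : False := by
  have hA : ∀ (a b : Fin 5 → K), a ≠ 0 → b ≠ 0 → JetSurj (sevenPts a b) 3 →
      ∀ i j, i ≠ j → a i = 0 → a j = 0 → False := by
    intro a b ha hb h i j hij hi hj
    obtain ⟨z, hiz, hjz⟩ := exists_third i j hij
    obtain ⟨σ, rfl, rfl, rfl⟩ := exists_perm3 hij hiz hjz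
    exact seven_A (comp_perm_ne ha σ) (comp_perm_ne hb σ) (sevenPts_perm h σ) hi hj
  have hC : ∀ i, a i = 0 → b i = 0 → False := by
    intro i hai hbi
    obtain ⟨j, hj⟩ := exists_ne i
    obtain ⟨z, hiz, hjz⟩ := exists_third i j hj.symm
    obtain ⟨σ, rfl, rfl, rfl⟩ := exists_perm3 hj.symm hiz hjz
    exact seven_C (comp_perm_ne ha σ) (comp_perm_ne hb σ) (sevenPts_perm h σ) hai hbi
  have hA1 := hA a b ha hb h
  have hA2 := hA b a hb ha (sevenPts_swap h)
  have hV : ∀ i j, i ≠ j → minorD a b i j = 0 → a i ≠ 0 ∧ b i ≠ 0 := by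
    intro i j hij hD
    unfold minorD at hD
    constructor
    · intro h0
      rw [h0, zero_mul, zero_sub, neg_eq_zero, mul_eq_zero] at hD
      rcases hD with hD | hD
      · exact hA1 i j hij h0 hD
      · exact hC i h0 hD
    · intro h0
      rw [h0, mul_zero, sub_zero, mul_eq_zero] at hD
      rcases hD with hD | hD
      · exact hC i hD h0
      · exact hA2 i j hij h0 hD
  have hE : ∀ i j k, i ≠ j → i ≠ k → j ≠ k → minorD a b i j = 0 → minorD a b i k = 0 →
      False := by
    intro i j k hij hik hjk h1 h2
    have h3 := (hV i j hij h1).1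
    obtain ⟨σ, rfl, rfl, rfl⟩ := exists_perm3 hij hik hjk
    exact seven_B (comp_perm_ne ha σ) (comp_perm_ne hb σ) (sevenPts_perm h σ) h3 h1 h2
  obtain ⟨l, m, hlm, al, bl, am, bm, hD, hrest⟩ := exists_good_pair a b hA1 hA2 hE hV
  obtain ⟨z, hlz, hmz⟩ := exists_third l m hlm
  obtain ⟨σ, rfl, rfl, rfl⟩ := exists_perm3 hlm hlz hmz
  have n : ∀ i j : Fin 5, i ≠ j → σ i ≠ σ j := fun i j h => σ.injective.ne h
  have hz := seven_coef_zero (comp_perm_ne ha σ) (comp_perm_ne hb σ) (sevenPts_perm h σ)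
  have h23 := hrest (σ 2) (σ 3) (n _ _ (by decide)) (n _ _ (by decide)) (n _ _ (by decide))
    (n _ _ (by decide)) (n _ _ (by decide))
  have h24 := hrest (σ 2) (σ 4) (n _ _ (by decide)) (n _ _ (by decide)) (n _ _ (by decide))
    (n _ _ (by decide)) (n _ _ (by decide))
  have h34 := hrest (σ 3) (σ 4) (n _ _ (by decide)) (n _ _ (by decide)) (n _ _ (by decide))
    (n _ _ (by decide)) (n _ _ (by decide))
  have hz' : (-1) * minorD a b (σ 2) (σ 3) * minorD a b (σ 2) (σ 4) * minorD a b (σ 3) (σ 4) *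
      minorD a b (σ 0) (σ 1) * (a (σ 0) * a (σ 1) * b (σ 0) * b (σ 1)) = 0 := hz
  have hneg : (-1 : K) ≠ 0 := neg_ne_zero.2 one_ne_zero
  exact mul_ne_zero (mul_ne_zero (mul_ne_zero (mul_ne_zero (mul_ne_zero hneg h23) h24) h34) hD)
    (mul_ne_zero (mul_ne_zero (mul_ne_zero al am) bl) bm) hz'

end PartFive
section PartSix
variable {K : Type} [Field K]

lemma seven_points {ι : Type} {n : ℕ} {p : ι → Fin (n + 1) → K}
    (hp : ∀ i, p i ≠ 0) (h : JetSurj p 3) (hn : 4 ≤ n) (Q : Finset ι) (hQ : 7 ≤ Q.card)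
    (W : Submodule K (Fin (n + 1) → K)) (hW : Module.finrank K W ≤ 5)
    (hm : ∀ i ∈ Q, p i ∈ W) : False := by
  classical
  have hSW : Submodule.span K (p '' (Q : Set ι)) ≤ W := by
    rw [Submodule.span_le]
    rintro _ ⟨i, hi, rfl⟩
    exact hm i hi
  have hmem : ∀ i ∈ Q, p i ∈ Submodule.span K (p '' (Q : Set ι)) := fun i hi =>
    Submodule.subset_span ⟨i, hi, rfl⟩
  have hle : Module.finrank K (Submodule.span K (p '' (Q : Set ι))) ≤ 5 :=
    (Submodule.finrank_mono hSW).trans hW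
  have hr : Module.finrank K (Submodule.span K (p '' (Q : Set ι))) = 5 := by
    by_contra hne
    have := count_le (j := 3) hp h (by omega) (Subtype.val : Q → ι) Subtype.val_injective
      (Submodule.span K (p '' (Q : Set ι))) (by omega) (fun i => hmem i.1 i.2)
    have e1 : (3 + 3).choose 3 = 20 := by decide
    rw [e1, Fintype.card_coe] at this
    omega
  have hex := Submodule.exists_fun_fin_finrank_span_eq K (p '' (Q : Set ι))
  rw [hr] at hex
  obtain ⟨f, hf, hfs, hfi⟩ := hex
  choose g hgQ hgf using hf
  have hginj : Function.Injective g := by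
    intro x y hxy
    apply hfi.injective
    rw [← hgf, ← hgf, hxy]
  have hcard : 1 < (Q \ Finset.univ.image g).card := by
    have h1 := Finset.le_card_sdiff (Finset.univ.image g) Q
    rw [Finset.card_image_of_injective _ hginj, Finset.card_univ, Fintype.card_fin] at h1
    omega
  obtain ⟨x, y, hx, hy, hxy⟩ := Finset.one_lt_card_iff.1 hcard
  simp only [Finset.mem_sdiff, Finset.mem_image, Finset.mem_univ, true_and, not_exists] at hx hy
  let L := Fintype.linearCombination K f
  have hLi : Function.Injective L := LinearMap.ker_eq_bot.1
    (LinearMap.ker_eq_bot'.2 fun c hc => by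
      have := Fintype.linearIndependent_iff.1 hfi c (by
        simpa [L, Fintype.linearCombination_apply] using hc)
      exact funext this)
  have hrange : ∀ i ∈ Q, ∃ c, L c = p i := by
    intro i hi
    have := hmem i hi
    rw [← hfs, ← Fintype.range_linearCombination] at this
    exact this
  obtain ⟨a, ha⟩ := hrange x hx.1
  obtain ⟨b, hb⟩ := hrange y hy.1
  have ha0 : a ≠ 0 := by
    rintro rfl
    rw [map_zero] at ha
    exact hp x ha.symm
  have hb0 : b ≠ 0 := by
    rintro rfl
    rw [map_zero] at hb
    exact hp y hb.symm
  have he : Function.Injective (Sum.elim g ![x, y]) := by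
    refine hginj.sumElim ?_ ?_
    · intro c d
      fin_cases c <;> fin_cases d <;> simp [hxy, hxy.symm]
    · intro k c
      fin_cases c
      · exact hx.2 k
      · exact hy.2 k
  refine not_jetSurj_sevenPts ha0 hb0 (jetSurj_restrict h L hLi _ he _ ?_)
  rintro (k | c)
  · simp only [sevenPts, Sum.elim_inl, hgf]
    simp [L]
  · fin_cases c
    · exact ha
    · exact hb

lemma card_le_of_span {n j : ℕ} {p : Fin (n + 3) → Fin (n + 1) → K}
    (hspan : Submodule.span K (Set.range p) = ⊤) {Q : Finset (Fin (n + 3))}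
    (W : Submodule K (Fin (n + 1) → K)) (hW : Module.finrank K W ≤ j + 1)
    (hm : ∀ i ∈ Q, p i ∈ W) : Q.card ≤ j + 3 := by
  classical
  have htop : W ⊔ Submodule.span K (Qᶜ.image p : Set (Fin (n + 1) → K)) = ⊤ := by
    rw [eq_top_iff, ← hspan, Submodule.span_le]
    rintro _ ⟨i, rfl⟩
    by_cases hi : i ∈ Q
    · exact Submodule.mem_sup_left (hm i hi)
    · exact Submodule.mem_sup_right (Submodule.subset_span (by
        simp only [Finset.coe_image]
        exact ⟨i, by simpa using hi, rfl⟩))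
  have h1 := Submodule.finrank_add_le_finrank_add_finrank W
    (Submodule.span K (Qᶜ.image p : Set (Fin (n + 1) → K)))
  rw [htop, finrank_top, Module.finrank_fin_fun] at h1
  have h2 := finrank_span_finset_le_card (R := K) (Qᶜ.image p)
  have h3 : (Qᶜ.image p).card ≤ Qᶜ.card := Finset.card_image_le
  have h4 := Finset.card_compl Q
  have h5 := Finset.card_le_univ Q
  rw [Fintype.card_fin] at h4 h5
  have h6 : Module.finrank K (Submodule.span K (Qᶜ.image p : Set (Fin (n + 1) → K))) ≤
    (Qᶜ.image p).card := h2
  omega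

lemma lower_bound {n t : ℕ} (hn : 2 ≤ n) {p : Fin (n + 3) → Fin (n + 1) → K}
    (hdist : ProjDistinct p) (hspan : Submodule.span K (Set.range p) = ⊤)
    (h : JetSurj p t) (Q : Finset (Fin (n + 3))) (j : ℕ) (hj : 1 ≤ j) (hjn : j ≤ n)
    (hQ : OnLinearSubspace p Q j) : 2 * Q.card < t * j + 2 := by
  classical
  have hp := hdist.1
  have key : ∀ (Q : Finset (Fin (n + 3))) (j : ℕ), j ≤ n → OnLinearSubspace p Q j →
      Q.card * (j + 1) ≤ (j + t).choose t := by
    intro Q j hjn hQ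
    obtain ⟨W, hW, hm⟩ := hQ
    have := count_le hp h hjn (Subtype.val : Q → _) Subtype.val_injective W hW
      (fun i => hm i.1 i.2)
    rwa [Fintype.card_coe] at this
  have h01 : (0 : Fin (n + 3)) ≠ 1 := by simp
  have ht3 : 3 ≤ t := by
    have hO : OnLinearSubspace p {0, 1} 1 := by
      refine ⟨Submodule.span K (Set.range ![p 0, p 1]), ?_, ?_⟩
      · exact (finrank_range_le_card (R := K) ![p 0, p 1]).trans (by simp)
      · intro i hi
        apply Submodule.subset_span
        rw [Finset.mem_insert, Finset.mem_singleton] at hi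
        rcases hi with hi | hi
        · exact ⟨0, by rw [hi]; rfl⟩
        · exact ⟨1, by rw [hi]; rfl⟩
    have := key {0, 1} 1 (by omega) hO
    rw [Finset.card_pair h01, Nat.add_comm 1 t, Nat.choose_succ_self_right] at this
    omega
  by_contra! hcon
  obtain ⟨W, hW, hm⟩ := id hQ
  have hq := card_le_of_span hspan W hW hm
  have hk := key Q j hjn hQ
  have h3j : 3 * j ≤ t * j := Nat.mul_le_mul_right j ht3
  have hj4 : j ≤ 4 := by omega
  interval_cases j
  · rw [Nat.add_comm 1 t, Nat.choose_succ_self_right] at hk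
    omega
  · have ht4 : t ≤ 4 := by omega
    interval_cases t
    · have e1 : (2 + 3).choose 3 = 10 := by decide
      omega
    · have := five_coplanar hp h hjn (Subtype.val : Q → _) Subtype.val_injective W hW
        (fun i => hm i.1 i.2)
      rw [Fintype.card_coe] at this
      omega
  · have ht4 : t ≤ 3 := by omega
    interval_cases t
    have e1 : (3 + 3).choose 3 = 20 := by decide
    omega
  · have ht4 : t ≤ 3 := by omega
    interval_cases t
    exact seven_points hp h hjn Q (by omega) W hW hm

end PartSix

/-- Proposition 4.2: `n+3` non-degenerate double points in `ℙⁿ` satisfy `reg(Z) = T(Z)`. -/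
theorem stmt10 {K : Type} [Field K] [IsAlgClosed K] {n : ℕ} (hn : 2 ≤ n)
    (p : Fin (n + 3) → Fin (n + 1) → K) (hdist : ProjDistinct p)
    (hspan : Submodule.span K (Set.range p) = ⊤) :
    regFat K p (fun _ => 2) = segreBound n p (fun _ => 2) := by 
  classical
  have hterm : ∀ (T j : ℕ) (Q : Finset (Fin (n + 3))), 1 ≤ j → Q.Nonempty →
      ((∑ _i ∈ Q, 2 + j - 2) / j ≤ T ↔ 2 * Q.card < T * j + 2) := by
    intro T j Q hj hQ
    have h1 := hQ.card_pos
    rw [Finset.sum_const, smul_eq_mul, ← Nat.lt_succ_iff, Nat.div_lt_iff_lt_mul (by omega),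
      Nat.succ_mul]
    omega
  have hiff : ∀ T, segreBound n p (fun _ => 2) ≤ T ↔
      ∀ (Q : Finset (Fin (n + 3))) (j : ℕ), 1 ≤ j → j ≤ n → Q.Nonempty →
        OnLinearSubspace p Q j → 2 * Q.card < T * j + 2 := by
    intro T
    unfold segreBound
    constructor
    · intro hT Q j hj hjn hQ hO
      rw [← hterm T j Q hj hQ]
      have h1 := Finset.sup_le_iff.1 hT j (Finset.mem_Icc.2 ⟨hj, hjn⟩)
      have h2 := Finset.sup_le_iff.1 h1 Q (Finset.mem_powerset.2 (Finset.subset_univ _))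
      rwa [if_pos ⟨hQ, hO⟩] at h2
    · intro hT
      refine Finset.sup_le fun j hj => Finset.sup_le fun Q _ => ?_
      rw [Finset.mem_Icc] at hj
      split_ifs with hc
      · exact (hterm T j Q hj.1 hc.1).2 (hT Q j hj.1 hj.2 hc.1 hc.2)
      · exact Nat.zero_le _
  have hmem : segreBound n p (fun _ => 2) ∈
      {t | hilbFn K (fatIdeal p fun _ => 2) t = fatMult n (fun _ : Fin (n + 3) => 2)} := by
    refine (hilb_iff_s10 p hdist.1 _).2 (jetSurj_of_segre (by omega) hdist ?_)
    intro Q j hj hjn hQ hO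
    have := (hiff _).1 le_rfl Q j hj hjn hQ hO
    omega
  unfold regFat regIndex
  refine le_antisymm (Nat.sInf_le hmem) ?_
  have hs := Nat.sInf_mem ⟨_, hmem⟩
  have hJ := (hilb_iff_s10 p hdist.1 _).1 hs
  exact (hiff _).2 fun Q j hj hjn _ hO => lower_bound hn hdist hspan hJ Q j hj hjn hO
end
end
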